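/- arXiv:1803.10337 — 2 statements merged into one kernel-verified Lean document; each statement's English description precedes it below -/
import Mathlib

section
/- M has the Weak Lefschetz Property: there exists a linear form L ∈ R_1 such that the multiplication map ×L : M_d → M_{d+1} is injective or surjective for every integer d. -/
open MvPolynomial

noncomputable section

variable {K : Type*} [Field K]

/-- `p` is homogeneous of (integer) degree `d`; for `d < 0` this forces `p = 0`. -/
def homog (p : MvPolynomial (Fin 3) K) (d : ℤ) : Prop :=
  IsWeightedHomogeneous (fun _ : Fin 3 => (1 : ℤ)) p d

/-- The degree-`d` graded piece of `⊕_{i=1}^{N} R(-a i)`, as a `K`-subspace of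
`Fin N → R`, `R = K[x,y,z]`. -/
def degPiece (N : ℕ) (a : Fin N → ℤ) (d : ℤ) :
    Submodule K (Fin N → MvPolynomial (Fin 3) K) :=
  Submodule.pi Set.univ fun i =>
    weightedHomogeneousSubmodule K (fun _ : Fin 3 => (1 : ℤ)) (d - a i)

lemma mem_degPiece {N : ℕ} {a : Fin N → ℤ} {d : ℤ} {v : Fin N → MvPolynomial (Fin 3) K} :
    v ∈ degPiece (K := K) N a d ↔ ∀ i, homog (v i) (d - a i) := by
  simp [degPiece, Submodule.mem_pi, mem_weightedHomogeneousSubmodule, homog]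

/-- The map `φ : ⊕ R(-a i) → ⊕ R(-b j)` given by the matrix `Φ`, as a `K`-linear map. -/
def phiK (n : ℕ) (Φ : Matrix (Fin n) (Fin (n + 2)) (MvPolynomial (Fin 3) K)) :
    (Fin (n + 2) → MvPolynomial (Fin 3) K) →ₗ[K] (Fin n → MvPolynomial (Fin 3) K) :=
  (Matrix.mulVecLin Φ).restrictScalars K

/-- The degree-`d` graded piece of `N = ker φ`. -/
def Nd (n : ℕ) (a : Fin (n + 2) → ℤ) (Φ : Matrix (Fin n) (Fin (n + 2)) (MvPolynomial (Fin 3) K))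
    (d : ℤ) : Submodule K (Fin (n + 2) → MvPolynomial (Fin 3) K) :=
  degPiece (n + 2) a d ⊓ LinearMap.ker (phiK n Φ)

/-- The image of the degree-`d` piece of `F` inside the degree-`d` piece of `G`,
viewed as a subspace of the latter. -/
def MdSub (n : ℕ) (a : Fin (n + 2) → ℤ) (b : Fin n → ℤ)
    (Φ : Matrix (Fin n) (Fin (n + 2)) (MvPolynomial (Fin 3) K)) (d : ℤ) :
    Submodule K ↥(degPiece (K := K) n b d) :=
  Submodule.comap (degPiece (K := K) n b d).subtype
    (Submodule.map (phiK n Φ) (degPiece (n + 2) a d))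

/-- The degree-`d` graded piece of `M = coker φ`. -/
abbrev Md (n : ℕ) (a : Fin (n + 2) → ℤ) (b : Fin n → ℤ)
    (Φ : Matrix (Fin n) (Fin (n + 2)) (MvPolynomial (Fin 3) K)) (d : ℤ) :=
  ↥(degPiece (K := K) n b d) ⧸ MdSub n a b Φ d

/-- Multiplication by `L` on tuples of polynomials, as a `K`-linear map. -/
def mulL (N : ℕ) (L : MvPolynomial (Fin 3) K) :
    (Fin N → MvPolynomial (Fin 3) K) →ₗ[K] (Fin N → MvPolynomial (Fin 3) K) :=
  ((LinearMap.lsmul (MvPolynomial (Fin 3) K) (Fin N → MvPolynomial (Fin 3) K)) L).restrictScalars K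

lemma mulL_apply {N : ℕ} (L : MvPolynomial (Fin 3) K) (v : Fin N → MvPolynomial (Fin 3) K) :
    mulL N L v = L • v := rfl

lemma mulL_mem {N : ℕ} {a : Fin N → ℤ} {L : MvPolynomial (Fin 3) K} (hL : homog L 1)
    {d : ℤ} {v : Fin N → MvPolynomial (Fin 3) K} (hv : v ∈ degPiece (K := K) N a (d - 1)) :
    mulL N L v ∈ degPiece (K := K) N a d := by
  rw [mem_degPiece] at hv ⊢
  intro i
  have h := hL.mul (hv i)
  have e : (1 : ℤ) + (d - 1 - a i) = d - a i := by ring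
  rw [e] at h
  simpa [mulL_apply, smul_eq_mul, homog] using h

/-- Multiplication by `L` from the degree-`d-1` piece of `G` to the degree-`d` piece. -/
def mulLres (n : ℕ) (b : Fin n → ℤ) (L : MvPolynomial (Fin 3) K) (hL : homog L 1) (d : ℤ) :
    ↥(degPiece (K := K) n b (d - 1)) →ₗ[K] ↥(degPiece (K := K) n b d) :=
  (mulL n L).restrict fun _ hv => mulL_mem hL hv

lemma mulLres_comap (n : ℕ) (a : Fin (n + 2) → ℤ) (b : Fin n → ℤ)
    (Φ : Matrix (Fin n) (Fin (n + 2)) (MvPolynomial (Fin 3) K))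
    (L : MvPolynomial (Fin 3) K) (hL : homog L 1) (d : ℤ) :
    MdSub n a b Φ (d - 1) ≤ Submodule.comap (mulLres n b L hL d) (MdSub n a b Φ d) := by
  rintro ⟨w, hw⟩ hmem
  obtain ⟨v, hv, hφv⟩ := hmem
  refine ⟨mulL (n + 2) L v, mulL_mem hL hv, ?_⟩
  show phiK n Φ (mulL (n + 2) L v) = ((mulLres n b L hL d) ⟨w, hw⟩ : Fin n → MvPolynomial (Fin 3) K)
  have : phiK n Φ (mulL (n + 2) L v) = L • phiK n Φ v := by
    simp [phiK, mulL_apply]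
  rw [this, hφv]
  rfl

/-- The map induced by multiplication by `L` from `M_{d-1}` to `M_d`,
where `M = coker φ`. -/
def mulLmap (n : ℕ) (a : Fin (n + 2) → ℤ) (b : Fin n → ℤ)
    (Φ : Matrix (Fin n) (Fin (n + 2)) (MvPolynomial (Fin 3) K))
    (L : MvPolynomial (Fin 3) K) (hL : homog L 1) (d : ℤ) :
    Md n a b Φ (d - 1) →ₗ[K] Md n a b Φ d :=
  Submodule.mapQ (MdSub n a b Φ (d - 1)) (MdSub n a b Φ d) (mulLres n b L hL d)
    (mulLres_comap n a b Φ L hL d)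

/-- The linear form with coefficient vector `c`. -/
def linform (c : Fin 3 → K) : MvPolynomial (Fin 3) K := ∑ i, C (c i) * X i

lemma homog_linform (c : Fin 3 → K) : homog (linform c) 1 := by
  rw [homog, ← mem_weightedHomogeneousSubmodule]
  refine sum_mem fun i _ => ?_
  rw [mem_weightedHomogeneousSubmodule]
  simpa using (isWeightedHomogeneous_C (fun _ : Fin 3 => (1 : ℤ)) (c i)).mul
    (isWeightedHomogeneous_X K (fun _ : Fin 3 => (1 : ℤ)) i)

/-- Finite length of `coker φ`: all sufficiently high graded pieces vanish. -/
def FiniteColength (n : ℕ) (a : Fin (n + 2) → ℤ) (b : Fin n → ℤ)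
    (Φ : Matrix (Fin n) (Fin (n + 2)) (MvPolynomial (Fin 3) K)) : Prop :=
  ∃ D : ℤ, ∀ d : ℤ, D ≤ d →
    degPiece (K := K) n b d ≤ Submodule.map (phiK n Φ) (degPiece (n + 2) a d)

end

/-!
Restrict the presentation matrix `Φ` to a general line `ℓ = 0`. If the restricted matrix is
surjective in degree `d`, then so is `×ℓ : M_{d-1} → M_d`. Otherwise, since `Φ` has two more columns
than rows, a rank count shows that all syzygies of degree at most `d + 1` on the line are multiples
of one syzygy `f` of minimal degree `p ≤ d`, which moreover vanishes at no point of the line.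

Let the line vary. Differentiating the identity `Φ f = ℓ g` in the coefficients of the line, along
the lines through a fixed point `P`, produces a syzygy of degree `p + 1` whose value at `P` is a
multiple of the derivative of `f(P)`. It is a multiple of `f`, so in characteristic zero the
direction of `f(P)` is the same for all lines through `P`. Hence, as in the descent argument for the
Grauert–Mülich theorem, the family comes from a single syzygy of `Φ` on the plane. All syzygies of
degree `d` on the line then lift to the plane, which says that `×ℓ` is injective.
-/

namespace WeakLefschetz

/-! ### General points of affine space -/

section Generic

variable {τ K : Type*} [CommRing K] [IsDomain K]

/-- The filter of subsets of the affine space `τ → K` that contain a nonempty principal Zariski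
open set, so that `∀ᶠ c in zariskiGeneric τ K, p c` reads "`p c` holds for general `c`". -/
def zariskiGeneric (τ K : Type*) [CommRing K] [IsDomain K] : Filter (τ → K) where
  sets := {s | ∃ δ : MvPolynomial τ K, δ ≠ 0 ∧ ∀ c, eval c δ ≠ 0 → c ∈ s}
  univ_sets := ⟨1, one_ne_zero, fun _ _ => trivial⟩
  sets_of_superset := fun ⟨δ, hδ, h⟩ hst => ⟨δ, hδ, fun c hc => hst (h c hc)⟩
  inter_sets := fun ⟨δ, hδ, h⟩ ⟨ε, hε, h'⟩ => ⟨δ * ε, mul_ne_zero hδ hε, fun c hc => by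
    rw [map_mul] at hc
    exact ⟨h c (left_ne_zero_of_mul hc), h' c (right_ne_zero_of_mul hc)⟩⟩

lemma eventually_zariskiGeneric_iff {p : (τ → K) → Prop} :
    (∀ᶠ c in zariskiGeneric τ K, p c) ↔
      ∃ δ : MvPolynomial τ K, δ ≠ 0 ∧ ∀ c, eval c δ ≠ 0 → p c :=
  Iff.rfl

lemma eventually_eval_ne_zero {δ : MvPolynomial τ K} (hδ : δ ≠ 0) :
    ∀ᶠ c in zariskiGeneric τ K, eval c δ ≠ 0 :=
  ⟨δ, hδ, fun _ => id⟩

variable (K) in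
lemma eventually_apply_ne_zero (k : τ) : ∀ᶠ c in zariskiGeneric τ K, c k ≠ 0 := by
  simpa only [eval_X] using eventually_eval_ne_zero (X_ne_zero (R := K) k)

instance [Infinite K] : (zariskiGeneric τ K).NeBot := by
  refine ⟨fun hbot => ?_⟩
  obtain ⟨δ, hδ, h⟩ := Filter.empty_mem_iff_bot.mpr hbot
  exact hδ (MvPolynomial.funext fun c => by simpa using not_imp_comm.mp (h c) id)

end Generic

/-! ### Homogeneous polynomials with integer degrees -/

section Homogeneous

variable {σ τ R : Type*} [CommSemiring R] {p q : MvPolynomial σ R} {d e : ℤ}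

/-- Homogeneity of a polynomial with respect to an integer degree; the only homogeneous polynomial
of negative degree is `0`. -/
abbrev IsHomog (p : MvPolynomial σ R) (d : ℤ) : Prop :=
  IsWeightedHomogeneous (fun _ : σ => (1 : ℤ)) p d

lemma weight_one_eq_degree (m : σ →₀ ℕ) :
    Finsupp.weight (fun _ : σ => (1 : ℤ)) m = (m.degree : ℤ) := by
  simp [Finsupp.weight_apply, Finsupp.degree_apply, Finsupp.sum]

lemma isHomog_natCast_iff {n : ℕ} : IsHomog p n ↔ p.IsHomogeneous n :=
  forall_congr' fun m => imp_congr_right fun _ => by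
    rw [weight_one_eq_degree, Nat.cast_inj, Finsupp.degree_eq_weight_one, Pi.one_def]

namespace IsHomog

protected lemma cast (hp : IsHomog p d) (h : d = e) : IsHomog p e := h ▸ hp

protected lemma mul {D : ℤ} (hp : IsHomog p d) (hq : IsHomog q e) (hD : d + e = D) :
    IsHomog (p * q) D :=
  hD ▸ IsWeightedHomogeneous.mul hp hq

lemma nonneg (hp : IsHomog p d) (h0 : p ≠ 0) : 0 ≤ d := by
  obtain ⟨m, hm⟩ := MvPolynomial.ne_zero_iff.mp h0
  rw [← hp hm, weight_one_eq_degree]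
  positivity

lemma isHomogeneous_toNat (hp : IsHomog p d) : p.IsHomogeneous d.toNat := by
  rcases eq_or_ne p 0 with rfl | h0
  · exact isHomogeneous_zero _ _ _
  · exact isHomog_natCast_iff.mp (hp.cast (Int.toNat_of_nonneg (hp.nonneg h0)).symm)

lemma X (i : σ) : IsHomog (X i : MvPolynomial σ R) 1 := isWeightedHomogeneous_X _ _ _

lemma X_pow (i : σ) (n : ℕ) : IsHomog (MvPolynomial.X i ^ n : MvPolynomial σ R) n :=
  isHomog_natCast_iff.mpr (isHomogeneous_X_pow i n)

protected lemma aeval (hp : IsHomog p d) {g : σ → MvPolynomial τ R}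
    (hg : ∀ i, IsHomog (g i) 1) : IsHomog (aeval g p) d := by
  rcases eq_or_ne p 0 with rfl | h0
  · simpa using isWeightedHomogeneous_zero R _ d
  · lift d to ℕ using hp.nonneg h0
    have h := (isHomog_natCast_iff.mp hp).aeval g fun i => (hg i).isHomogeneous_toNat
    rw [Int.toNat_one, one_mul] at h
    exact isHomog_natCast_iff.mpr h

protected lemma rename (hp : IsHomog p d) (f : σ → τ) : IsHomog (rename f p) d := by
  rw [rename_eq_aeval]
  exact hp.aeval fun i => X (f i)

lemma aeval_smul (hp : IsHomog p d) {A : Type*} [CommSemiring A] [Algebra R A]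
    (P : σ → R) (t : A) : aeval (fun i => P i • t) p = eval P p • t ^ d.toNat := by
  rw [aeval_def, eval₂_eq, eval_eq, Finset.sum_smul]
  refine Finset.sum_congr rfl fun m hm => ?_
  have hdeg : m.degree = d.toNat := by
    rw [← hp (mem_support_iff.mp hm), weight_one_eq_degree, Int.toNat_natCast]
  simp_rw [smul_pow, Finset.prod_smul, Finset.prod_pow_eq_pow_sum, ← Algebra.smul_def, smul_smul]
  rw [← hdeg, Finsupp.degree_apply]

end IsHomog

/-- The homogeneous component of integer degree `d`. -/
noncomputable abbrev homogComponent (d : ℤ) : MvPolynomial σ R →ₗ[R] MvPolynomial σ R :=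
  weightedHomogeneousComponent (fun _ : σ => (1 : ℤ)) d

lemma isHomog_homogComponent (d : ℤ) (p : MvPolynomial σ R) : IsHomog (homogComponent d p) d :=
  weightedHomogeneousComponent_isWeightedHomogeneous _ _

lemma homogComponent_mul (hp : IsHomog p e) (q : MvPolynomial σ R) (d : ℤ) :
    homogComponent (e + d) (p * q) = p * homogComponent d q := by
  let _ := weightedGradedAlgebra R (fun _ : σ => (1 : ℤ))
  have h := DirectSum.coe_decompose_mul_add_of_left_mem
    (weightedHomogeneousSubmodule R (fun _ : σ => (1 : ℤ))) (j := d) (b := q)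
    ((mem_weightedHomogeneousSubmodule _ _ _ _).mpr hp)
  rwa [← weightedDecomposition.decompose'_apply, ← weightedDecomposition.decompose'_apply]

lemma homogComponent_aeval {g : σ → MvPolynomial τ R} (hg : ∀ i, IsHomog (g i) 1)
    (p : MvPolynomial σ R) : homogComponent d (aeval g p) = aeval g (homogComponent d p) := by
  induction p using MvPolynomial.induction_on' with
  | add p q hp hq => simp only [map_add, hp, hq]
  | monomial m r =>
    have hm : IsHomog (monomial m r) (m.degree : ℤ) :=
      isHomog_natCast_iff.mpr (isHomogeneous_monomial r rfl)
    rcases eq_or_ne d (m.degree : ℤ) with rfl | hd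
    · rw [homogComponent, homogComponent, weightedHomogeneousComponent_eq_self hm,
        weightedHomogeneousComponent_eq_self (hm.aeval hg)]
    · rw [homogComponent, homogComponent, hm.weightedHomogeneousComponent_ne _ hd,
        (hm.aeval hg).weightedHomogeneousComponent_ne _ hd, map_zero]

end Homogeneous

lemma IsHomog.of_mul {σ R : Type*} [CommRing R] [IsDomain R] {p q : MvPolynomial σ R} {d e : ℤ}
    (hp : IsHomog p e) (h0 : p ≠ 0) (hpq : IsHomog (p * q) d) : IsHomog q (d - e) := by
  have h := homogComponent_mul hp q (d - e)
  rw [add_sub_cancel, weightedHomogeneousComponent_eq_self hpq] at h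
  rw [mul_left_cancel₀ h0 h]
  exact isHomog_homogComponent _ _

/-! ### Graded pieces of free modules and of kernels of matrices -/

section GradedPieces

open Matrix

variable {σ ι κ R : Type*} [CommRing R] {a : ι → ℤ} {b : κ → ℤ} {d e D : ℤ}
  {v : ι → MvPolynomial σ R}

/-- The degree-`d` piece of the graded free module `⊕ᵢ S(-a i)` over `S = R[σ]`. -/
noncomputable def gradedPiece (a : ι → ℤ) (d : ℤ) : Submodule R (ι → MvPolynomial σ R) :=
  Submodule.pi Set.univ fun i => weightedHomogeneousSubmodule R (fun _ : σ => (1 : ℤ)) (d - a i)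

lemma mem_gradedPiece : v ∈ gradedPiece a d ↔ ∀ i, IsHomog (v i) (d - a i) := by
  simp [gradedPiece, Submodule.mem_pi, mem_weightedHomogeneousSubmodule]

lemma smul_mem_gradedPiece {h : MvPolynomial σ R} (hh : IsHomog h e) (hv : v ∈ gradedPiece a d)
    (hD : e + d = D) : h • v ∈ gradedPiece a D :=
  mem_gradedPiece.mpr fun i => hh.mul (mem_gradedPiece.mp hv i) (by lia)

lemma mem_gradedPiece_of_smul_mem [IsDomain R] {h : MvPolynomial σ R} (hh : IsHomog h e)
    (h0 : h ≠ 0) (hv : h • v ∈ gradedPiece a D) (hD : e + d = D) : v ∈ gradedPiece a d :=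
  mem_gradedPiece.mpr fun i => (hh.of_mul h0 (mem_gradedPiece.mp hv i)).cast (by lia)

/-- The tuple of homogeneous components that is the degree-`d` component of an element of the
graded free module `⊕ᵢ S(-a i)`. -/
noncomputable def gradedComponent (a : ι → ℤ) (d : ℤ) (v : ι → MvPolynomial σ R) :
    ι → MvPolynomial σ R :=
  fun i => homogComponent (d - a i) (v i)

lemma gradedComponent_mem (v : ι → MvPolynomial σ R) :
    gradedComponent a d v ∈ gradedPiece a d :=
  mem_gradedPiece.mpr fun _ => isHomog_homogComponent _ _

lemma gradedComponent_eq_self (hv : v ∈ gradedPiece a d) : gradedComponent a d v = v :=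
  funext fun i => weightedHomogeneousComponent_eq_self (mem_gradedPiece.mp hv i)

/-- The matrix `A` maps `gradedPiece a d` to `gradedPiece b d`; this is surjectivity of that map. -/
def SurjectiveInDegree [Fintype ι] (A : Matrix κ ι (MvPolynomial σ R)) (a : ι → ℤ) (b : κ → ℤ)
    (d : ℤ) : Prop :=
  ∀ g ∈ gradedPiece b d, ∃ u ∈ gradedPiece a d, A *ᵥ u = g

/-- The degree-`d` piece of the kernel of a matrix acting on `⊕ᵢ S(-a i)`. -/
noncomputable def syzygies [Fintype ι] (A : Matrix κ ι (MvPolynomial σ R)) (a : ι → ℤ) (d : ℤ) :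
    Submodule R (ι → MvPolynomial σ R) :=
  gradedPiece a d ⊓ LinearMap.ker (A.mulVecLin.restrictScalars R)

section

variable [Fintype ι] {A : Matrix κ ι (MvPolynomial σ R)}

lemma mem_syzygies : v ∈ syzygies A a d ↔ v ∈ gradedPiece a d ∧ A *ᵥ v = 0 := Iff.rfl

lemma smul_mem_syzygies {h : MvPolynomial σ R} (hh : IsHomog h e) (hv : v ∈ syzygies A a d)
    (hD : e + d = D) : h • v ∈ syzygies A a D :=
  mem_syzygies.mpr ⟨smul_mem_gradedPiece hh hv.1 hD, by
    rw [mulVec_smul, (mem_syzygies.mp hv).2, smul_zero]⟩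

lemma mulVec_mem_gradedPiece (hA : ∀ j i, IsHomog (A j i) (a i - b j))
    (hv : v ∈ gradedPiece a d) : A *ᵥ v ∈ gradedPiece b d :=
  mem_gradedPiece.mpr fun j => IsWeightedHomogeneous.sum _ _ _ fun i _ =>
    (hA j i).mul (mem_gradedPiece.mp hv i) (by ring)

lemma mulVec_gradedComponent (hA : ∀ j i, IsHomog (A j i) (a i - b j))
    (v : ι → MvPolynomial σ R) :
    A *ᵥ gradedComponent a d v = gradedComponent b d (A *ᵥ v) := by
  funext j
  simp only [mulVec, dotProduct, gradedComponent, map_sum]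
  refine Finset.sum_congr rfl fun i _ => ?_
  rw [← homogComponent_mul (hA j i), show a i - b j + (d - a i) = d - b j by ring]

lemma gradedComponent_mem_syzygies (hA : ∀ j i, IsHomog (A j i) (a i - b j))
    (hv : A *ᵥ v = 0) : gradedComponent a d v ∈ syzygies A a d := by
  refine mem_syzygies.mpr ⟨gradedComponent_mem v, ?_⟩
  rw [mulVec_gradedComponent hA, hv]
  exact funext fun _ => map_zero _

variable [IsDomain R]

lemma mem_syzygies_of_smul_mem {h : MvPolynomial σ R} (hh : IsHomog h e) (h0 : h ≠ 0)
    (hv : h • v ∈ syzygies A a D) (hD : e + d = D) : v ∈ syzygies A a d := by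
  obtain ⟨hmem, hker⟩ := mem_syzygies.mp hv
  rw [mulVec_smul] at hker
  exact mem_syzygies.mpr ⟨mem_gradedPiece_of_smul_mem hh h0 hmem hD,
    (smul_eq_zero.mp hker).resolve_left h0⟩

lemma syzygies_eq_bot_of_le [Nonempty σ] (hD : syzygies A a D = ⊥) (hd : d ≤ D) :
    syzygies A a d = ⊥ := by
  obtain ⟨x⟩ := ‹Nonempty σ›
  refine (Submodule.eq_bot_iff _).mpr fun v hv => ?_
  have h : (X x ^ (D - d).toNat : MvPolynomial σ R) • v ∈ syzygies A a D :=
    smul_mem_syzygies (IsHomog.X_pow _ _) hv (by lia)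
  rw [hD, Submodule.mem_bot] at h
  exact (smul_eq_zero.mp h).resolve_left (pow_ne_zero _ (X_ne_zero x))

lemma le_of_mem_syzygies_of_ne_zero [Nonempty σ] (hmin : syzygies A a (d - 1) = ⊥)
    (hv : v ∈ syzygies A a e) (h0 : v ≠ 0) : d ≤ e := by
  by_contra hlt
  rw [syzygies_eq_bot_of_le hmin (by lia), Submodule.mem_bot] at hv
  exact h0 hv

end

instance {K : Type*} [Field K] [Finite σ] (d : ℤ) :
    FiniteDimensional K (weightedHomogeneousSubmodule K (fun _ : σ => (1 : ℤ)) d) := by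
  have : FiniteDimensional K (homogeneousSubmodule σ K d.toNat) :=
    Module.Finite.iff_fg.mpr (homogeneousSubmodule_fg _ _ d.toNat)
  exact Submodule.finiteDimensional_of_le (S₂ := homogeneousSubmodule σ K d.toNat)
    fun _ hp => IsHomog.isHomogeneous_toNat hp

instance {K : Type*} [Field K] [Finite σ] [Finite ι] (a : ι → ℤ) (d : ℤ) :
    FiniteDimensional K (gradedPiece a d : Submodule K (ι → MvPolynomial σ K)) :=
  Module.Finite.iff_fg.mpr (Submodule.fg_pi fun _ => Module.Finite.iff_fg.mp inferInstance)

end GradedPieces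

/-! ### Evaluation of homogeneous polynomials and syzygies at a point -/

section Evaluation

open Filter Matrix

variable {σ ι κ K : Type*} [Field K] {P : σ → K}

lemma IsHomog.mem_span_of_eval_eq_zero {p : MvPolynomial σ K} {d : ℤ} (hp : IsHomog p d) {k : σ}
    (hk : P k ≠ 0) (h : eval P p = 0) :
    p ∈ Ideal.span (Set.range fun i => C (P k) * MvPolynomial.X i - C (P i) * .X k) := by
  set I := Ideal.span (Set.range fun i => C (P k) * MvPolynomial.X i - C (P i) * .X k)
  let π : MvPolynomial σ K →ₐ[K] MvPolynomial σ K ⧸ I := Ideal.Quotient.mkₐ K I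
  have hX (i : σ) : π (.X i) = P i • (P k)⁻¹ • π (.X k) := by
    have h0 : P k • π (.X i) = P i • π (.X k) := by
      rw [← map_smul, ← map_smul, ← sub_eq_zero, ← map_sub, smul_eq_C_mul, smul_eq_C_mul]
      exact Ideal.Quotient.eq_zero_iff_mem.mpr (Ideal.subset_span ⟨i, rfl⟩)
    rw [smul_comm, ← h0, inv_smul_smul₀ hk]
  refine Ideal.Quotient.eq_zero_iff_mem.mp (show π p = 0 from ?_)
  rw [← aeval_X_left_apply p, comp_aeval_apply]
  rw [funext hX, hp.aeval_smul, h, zero_smul]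

lemma exists_isHomog_eval_eq (hP : P ≠ 0) {e : ℤ} (he : 0 ≤ e) (r : K) :
    ∃ h : MvPolynomial σ K, IsHomog h e ∧ eval P h = r := by
  obtain ⟨k, hk⟩ := Function.ne_iff.mp hP
  lift e to ℕ using he
  refine ⟨C (r / P k ^ e) * X k ^ e, (IsHomog.X_pow k e).C_mul _, ?_⟩
  rw [map_mul, eval_C, map_pow, eval_X, div_mul_cancel₀ _ (pow_ne_zero _ hk)]

variable [Fintype ι] {A : Matrix κ ι (MvPolynomial σ K)} {a : ι → ℤ} {b : κ → ℤ}

lemma mulVec_eval {S : Type*} [CommSemiring S] (B : Matrix κ ι (MvPolynomial σ S))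
    (P : σ → S) (f : ι → MvPolynomial σ S) :
    B.map (eval P) *ᵥ (eval P ∘ f) = eval P ∘ (B *ᵥ f) :=
  funext fun j => (RingHom.map_mulVec (eval P) B f j).symm

lemma mulVec_eval_surjective [Finite κ] (hsurj : ∀ᶠ d in atTop, SurjectiveInDegree A a b d)
    (hP : P ≠ 0) : Function.Surjective (A.map (eval P)).mulVec := by
  intro y
  obtain ⟨B, hB⟩ := (Set.finite_range b).bddAbove
  obtain ⟨d, hd, hBd⟩ := (hsurj.and (eventually_ge_atTop B)).exists
  choose g hg hgy using fun j => exists_isHomog_eval_eq hP (e := d - b j)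
    (by have := hB ⟨j, rfl⟩; lia) (y j)
  obtain ⟨u, -, hu⟩ := hd g (mem_gradedPiece.mpr hg)
  exact ⟨eval P ∘ u, by rw [mulVec_eval, hu]; exact funext hgy⟩

end Evaluation

lemma exists_eq_smul_add_smul_of_mulVec_eq_zero {ι κ K : Type*} [Field K] [Fintype ι] [Fintype κ]
    (hcard : Fintype.card ι = Fintype.card κ + 2) {B : Matrix κ ι K}
    (hB : Function.Surjective B.mulVec) {v₁ v₂ w : ι → K} (h₁ : B.mulVec v₁ = 0)
    (h₂ : B.mulVec v₂ = 0) (hli : LinearIndependent K ![v₁, v₂]) (hw : B.mulVec w = 0) :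
    ∃ s t : K, w = s • v₁ + t • v₂ := by
  have hker : Module.finrank K (LinearMap.ker B.mulVecLin) = 2 := by
    have h := LinearMap.finrank_range_add_finrank_ker B.mulVecLin
    rw [LinearMap.range_eq_top.mpr hB, finrank_top, Module.finrank_fintype_fun_eq_card,
      Module.finrank_fintype_fun_eq_card] at h
    lia
  have hspan : Submodule.span K (Set.range ![v₁, v₂]) = LinearMap.ker B.mulVecLin := by
    refine Submodule.eq_of_le_of_finrank_eq ?_ (by
      rw [finrank_span_eq_card hli, hker, Fintype.card_fin])
    rw [Submodule.span_le, Set.range_subset_iff]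
    exact Fin.forall_fin_two.mpr ⟨h₁, h₂⟩
  have hmem : w ∈ Submodule.span K (Set.range ![v₁, v₂]) := hspan ▸ hw
  rw [Matrix.range_cons_cons_empty, Submodule.mem_span_pair] at hmem
  exact hmem.imp fun s => Exists.imp fun t => Eq.symm

/-! ### Syzygies over a polynomial ring in two variables -/

section TwoVariables

open Filter Matrix

variable {ι κ K : Type*} [Field K] {P : Fin 2 → K} {p q d : ℤ}

/-- The linear form in two variables that vanishes at `P`. -/
noncomputable def pointForm (P : Fin 2 → K) : MvPolynomial (Fin 2) K :=
  C (P 1) * X 0 - C (P 0) * X 1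

lemma isHomog_pointForm (P : Fin 2 → K) : IsHomog (pointForm P) 1 :=
  ((IsHomog.X 0).C_mul _).sub ((IsHomog.X 1).C_mul _)

lemma pointForm_ne_zero (hP : P ≠ 0) : pointForm P ≠ 0 := by
  contrapose! hP
  have h₁ : P 1 = 0 := by simpa [pointForm] using congrArg (eval ![1, 0]) hP
  have h₀ : P 0 = 0 := by simpa [pointForm] using congrArg (eval ![0, 1]) hP
  exact funext (Fin.forall_fin_two.mpr ⟨h₀, h₁⟩)

lemma pointForm_dvd {f : MvPolynomial (Fin 2) K} (hf : IsHomog f d) (hP : P ≠ 0)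
    (h : eval P f = 0) : pointForm P ∣ f := by
  obtain ⟨k, hk⟩ := Function.ne_iff.mp hP
  refine Ideal.mem_span_singleton.mp (Ideal.span_le.mpr ?_ (hf.mem_span_of_eval_eq_zero hk h))
  rintro _ ⟨i, rfl⟩
  rw [SetLike.mem_coe, Ideal.mem_span_singleton]
  fin_cases k <;> fin_cases i
  · simp
  · exact (dvd_neg.mpr dvd_rfl).trans (neg_sub _ _).dvd
  · exact dvd_rfl
  · simp

variable [Fintype ι] {A : Matrix κ ι (MvPolynomial (Fin 2) K)} {a : ι → ℤ} {b : κ → ℤ}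
  {f g : ι → MvPolynomial (Fin 2) K}

lemma exists_eq_pointForm_smul (hf : f ∈ syzygies A a d) (hP : P ≠ 0)
    (h : eval P ∘ f = 0) : ∃ g ∈ syzygies A a (d - 1), f = pointForm P • g := by
  choose g hg using fun i => pointForm_dvd (mem_gradedPiece.mp hf.1 i) hP (congrFun h i)
  obtain rfl : f = pointForm P • g := funext hg
  exact ⟨g, mem_syzygies_of_smul_mem (isHomog_pointForm P) (pointForm_ne_zero hP) hf (by ring), rfl⟩

lemma eval_ne_zero_of_minimal (hf : f ∈ syzygies A a p) (hf0 : f ≠ 0)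
    (hmin : syzygies A a (p - 1) = ⊥) (hP : P ≠ 0) : eval P ∘ f ≠ 0 := by
  intro h
  obtain ⟨g, hg, rfl⟩ := exists_eq_pointForm_smul hf hP h
  rw [hmin, Submodule.mem_bot] at hg
  exact hf0 (by rw [hg, smul_zero])

lemma exists_not_surjectiveInDegree_and_succ {σ : Type*} {A : Matrix κ ι (MvPolynomial σ K)}
    (hsurj : ∀ᶠ e in atTop, SurjectiveInDegree A a b e) (hd : ¬ SurjectiveInDegree A a b d) :
    ∃ d₁ ≥ d, ¬ SurjectiveInDegree A a b d₁ ∧ SurjectiveInDegree A a b (d₁ + 1) := by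
  obtain ⟨D, hD⟩ := eventually_atTop.mp hsurj
  obtain ⟨d₁, ⟨hdd₁, hd₁⟩, hmax⟩ := Int.exists_greatest_of_bdd
    (P := fun e => d ≤ e ∧ ¬ SurjectiveInDegree A a b e)
    ⟨D, fun e he => le_of_not_ge fun hDe => he.2 (hD e hDe)⟩ ⟨d, le_rfl, hd⟩
  refine ⟨d₁, hdd₁, hd₁, ?_⟩
  by_contra h
  have := hmax (d₁ + 1) ⟨by lia, h⟩
  lia

/-- If `g` spans the socle of the cokernel in the top degree `d₁` where `A` is not surjective, with
`X₀ g = A u` and `X₁ g = A v`, then `X₁ u - X₀ v` is a minimal generator of the kernel. -/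
lemma exists_minimal_generator (hsurj : ∀ᶠ e in atTop, SurjectiveInDegree A a b e)
    (hd : ¬ SurjectiveInDegree A a b d) :
    ∃ d₁ ≥ d, ∃ w ∈ syzygies A a (d₁ + 2), ∀ w₁ ∈ syzygies A a (d₁ + 1),
      ∀ w₂ ∈ syzygies A a (d₁ + 1), w ≠ (X 0 : MvPolynomial (Fin 2) K) • w₁
        + (X 1 : MvPolynomial (Fin 2) K) • w₂ := by
  obtain ⟨d₁, hdd₁, hd₁, hnext⟩ := exists_not_surjectiveInDegree_and_succ hsurj hd
  obtain ⟨g, hg, hgA⟩ : ∃ g ∈ gradedPiece b d₁, ∀ u ∈ gradedPiece a d₁, A *ᵥ u ≠ g := by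
    simpa [SurjectiveInDegree] using hd₁
  obtain ⟨u, hu, hAu⟩ := hnext ((X 0 : MvPolynomial (Fin 2) K) • g)
    (smul_mem_gradedPiece (IsHomog.X 0) hg (add_comm _ _))
  obtain ⟨v, hv, hAv⟩ := hnext ((X 1 : MvPolynomial (Fin 2) K) • g)
    (smul_mem_gradedPiece (IsHomog.X 1) hg (add_comm _ _))
  refine ⟨d₁, hdd₁, (X 1 : MvPolynomial (Fin 2) K) • u - (X 0 : MvPolynomial (Fin 2) K) • v,
    mem_syzygies.mpr ⟨sub_mem (smul_mem_gradedPiece (IsHomog.X 1) hu (by ring))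
      (smul_mem_gradedPiece (IsHomog.X 0) hv (by ring)), ?_⟩, fun w₁ _ w₂ hw₂ hw => ?_⟩
  · rw [mulVec_sub, mulVec_smul, mulVec_smul, hAu, hAv, smul_comm, sub_self]
  have hdvd (i : ι) : (X 0 : MvPolynomial (Fin 2) K) ∣ u i - w₂ i := by
    have h : X 1 * (u i - w₂ i) = X 0 * (v i + w₁ i) := by
      have := congrFun hw i
      simp only [Pi.sub_apply, Pi.smul_apply, Pi.add_apply, smul_eq_mul] at this
      linear_combination this
    exact (X_prime.dvd_or_dvd (Dvd.intro _ h.symm)).resolve_left (by simp [X_dvd_X])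
  choose y hy using hdvd
  have huy : u - w₂ = (X 0 : MvPolynomial (Fin 2) K) • y := funext hy
  have hyd : y ∈ gradedPiece a d₁ := mem_gradedPiece_of_smul_mem (IsHomog.X 0) (X_ne_zero 0)
    (huy ▸ sub_mem hu hw₂.1) (add_comm _ _)
  refine hgA y hyd (smul_right_injective _ (X_ne_zero (R := K) (0 : Fin 2)) ?_)
  simp only
  rw [← mulVec_smul, ← huy, mulVec_sub, hAu, (mem_syzygies.mp hw₂).2, sub_zero]

lemma linearIndependent_eval_pair (hf : f ∈ syzygies A a p) (hf0 : f ≠ 0)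
    (hmin : syzygies A a (p - 1) = ⊥) (hg : g ∈ syzygies A a q)
    (hgf : g ∉ Submodule.span (MvPolynomial (Fin 2) K) {f})
    (hq : ∀ g' ∈ syzygies A a (q - 1), g' ∈ Submodule.span (MvPolynomial (Fin 2) K) {f})
    (hP : P ≠ 0) : LinearIndependent K ![eval P ∘ f, eval P ∘ g] := by
  have hpq : p ≤ q :=
    le_of_mem_syzygies_of_ne_zero hmin hg fun h => hgf (h ▸ zero_mem _)
  rw [LinearIndependent.pair_iff' (eval_ne_zero_of_minimal hf hf0 hmin hP)]
  intro r hr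
  obtain ⟨h, hh, hhr⟩ := exists_isHomog_eval_eq hP (sub_nonneg.mpr hpq) r
  have hvan : eval P ∘ (g - h • f) = 0 := by
    funext i
    have := congrFun hr i
    simp only [Pi.smul_apply, Function.comp_apply, smul_eq_mul] at this
    simp [hhr, this]
  obtain ⟨g', hg', he⟩ := exists_eq_pointForm_smul
    (sub_mem hg (smul_mem_syzygies hh hf (sub_add_cancel q p))) hP hvan
  rw [sub_eq_iff_eq_add] at he
  refine hgf (he ▸ add_mem (Submodule.smul_mem _ _ (hq g' hg')) ?_)
  exact Submodule.smul_mem _ _ (Submodule.mem_span_singleton_self f)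

variable [Fintype κ]

lemma exists_eq_X_smul_add_X_smul (hcard : Fintype.card ι = Fintype.card κ + 2)
    (hsurj : ∀ᶠ e in atTop, SurjectiveInDegree A a b e)
    (hf : f ∈ syzygies A a p) (hg : g ∈ syzygies A a q) (hp : p ≤ d) (hq : q ≤ d)
    (hli : LinearIndependent K ![eval ![(1 : K), 0] ∘ f, eval ![(1 : K), 0] ∘ g])
    {w : ι → MvPolynomial (Fin 2) K} (hw : w ∈ syzygies A a (d + 1)) :
    ∃ w₁ ∈ syzygies A a d, ∃ w₂ ∈ syzygies A a d,
      w = (X 0 : MvPolynomial (Fin 2) K) • w₁ + (X 1 : MvPolynomial (Fin 2) K) • w₂ := by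
  set P : Fin 2 → K := ![1, 0] with hPdef
  have hP0 : P 0 = 1 := rfl
  have hP : P ≠ 0 := fun h => by simpa [hPdef] using congrFun h 0
  have hker {e : ℤ} {v : ι → MvPolynomial (Fin 2) K} (hv : v ∈ syzygies A a e) :
      A.map (eval P) *ᵥ (eval P ∘ v) = 0 := by
    rw [mulVec_eval, (mem_syzygies.mp hv).2]
    exact funext fun _ => map_zero _
  obtain ⟨s, t, hst⟩ := exists_eq_smul_add_smul_of_mulVec_eq_zero hcard
    (mulVec_eval_surjective hsurj hP) (hker hf) (hker hg) hli (hker hw)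
  obtain ⟨h, hh, hhs⟩ := exists_isHomog_eval_eq hP (sub_nonneg.mpr hp) s
  obtain ⟨k, hk, hkt⟩ := exists_isHomog_eval_eq hP (sub_nonneg.mpr hq) t
  have hw₁ : h • f + k • g ∈ syzygies A a d :=
    add_mem (smul_mem_syzygies hh hf (by ring)) (smul_mem_syzygies hk hg (by ring))
  have hvan : eval P ∘ (w - (X 0 : MvPolynomial (Fin 2) K) • (h • f + k • g)) = 0 := by
    funext i
    have := congrFun hst i
    simp only [Pi.smul_apply, Pi.add_apply, Function.comp_apply, smul_eq_mul] at this
    simp [hhs, hkt, this, hP0]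
  obtain ⟨w₂, hw₂, he⟩ := exists_eq_pointForm_smul
    (sub_mem hw (smul_mem_syzygies (IsHomog.X 0) hw₁ (add_comm _ _))) hP hvan
  refine ⟨_, hw₁, -w₂, neg_mem (by simpa using hw₂), ?_⟩
  rw [sub_eq_iff_eq_add'.mp he]
  simp [pointForm, hPdef]

/-- The low-degree part of the kernel has rank one: two syzygies that are independent at a point
would generate the kernel in all higher degrees, against `exists_minimal_generator`. -/
theorem mem_span_of_mem_syzygies (hcard : Fintype.card ι = Fintype.card κ + 2)
    (hsurj : ∀ᶠ e in atTop, SurjectiveInDegree A a b e) (hd : ¬ SurjectiveInDegree A a b d)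
    (hf : f ∈ syzygies A a p) (hf0 : f ≠ 0) (hmin : syzygies A a (p - 1) = ⊥)
    (hq : q ≤ d + 1) (hg : g ∈ syzygies A a q) :
    g ∈ Submodule.span (MvPolynomial (Fin 2) K) {f} := by
  by_contra hgf
  have hp {m : ℤ} {v : ι → MvPolynomial (Fin 2) K} (hv : v ∈ syzygies A a m)
      (hvf : v ∉ Submodule.span (MvPolynomial (Fin 2) K) {f}) : p ≤ m :=
    le_of_mem_syzygies_of_ne_zero hmin hv fun h => hvf (h ▸ zero_mem _)
  obtain ⟨m, ⟨hmd, v, hv, hvf⟩, hleast⟩ := Int.exists_least_of_bdd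
    (P := fun m => m ≤ d + 1 ∧ ∃ v ∈ syzygies A a m,
      v ∉ Submodule.span (MvPolynomial (Fin 2) K) {f})
    ⟨p, fun m ⟨_, v, hv, hvf⟩ => hp hv hvf⟩ ⟨q, hq, g, hg, hgf⟩
  have hpm : p ≤ m := hp hv hvf
  obtain ⟨d₁, hdd₁, w, hw, hwgen⟩ := exists_minimal_generator hsurj hd
  have hli := linearIndependent_eval_pair hf hf0 hmin hv hvf (fun v' hv' => by
    by_contra h
    have := hleast (m - 1) ⟨by lia, v', hv', h⟩
    lia) (P := ![1, 0]) (fun h => by simpa using congrFun h 0)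
  obtain ⟨w₁, hw₁, w₂, hw₂, he⟩ := exists_eq_X_smul_add_X_smul hcard hsurj hf hv
    (d := d₁ + 1) (by lia) (by lia) hli (by convert hw using 2; ring)
  exact hwgen w₁ hw₁ w₂ hw₂ he

end TwoVariables

/-! ### Maximal minors -/

section Minors

open Matrix

variable {ι κ : Type*} [Fintype ι]

lemma span_row_eq_top {F : Type*} [Field F] {M : Matrix κ ι F} (hM : ∀ u, M *ᵥ u = 0 → u = 0) :
    Submodule.span F (Set.range M.row) = ⊤ := by
  classical
  by_contra hne
  obtain ⟨φ, hφ, hle⟩ := Submodule.exists_le_ker_of_lt_top _ (lt_top_iff_ne_top.mpr hne)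
  refine hφ (LinearMap.pi_ext' fun i => LinearMap.ext_ring ?_)
  have hu : (fun i => φ (Pi.single i 1)) = 0 := hM _ <| funext fun j => by
    have h : φ (M.row j) = 0 := hle (Submodule.subset_span ⟨j, rfl⟩)
    rw [pi_eq_sum_univ' (M.row j), map_sum] at h
    simpa [mulVec, dotProduct] using h
  exact congrFun hu i

variable [DecidableEq ι]

lemma exists_det_submatrix_ne_zero_of_field {F : Type*} [Field F] {M : Matrix κ ι F}
    (hM : ∀ u, M *ᵥ u = 0 → u = 0) : ∃ r : ι → κ, (M.submatrix r id).det ≠ 0 := by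
  obtain ⟨κ', r, -, hspan, hli⟩ := exists_linearIndependent' F M.row
  rw [span_row_eq_top hM] at hspan
  let e : κ' ≃ ι := (Module.Basis.mk hli hspan.ge).indexEquiv (Pi.basisFun F ι)
  refine ⟨r ∘ e.symm, IsUnit.ne_zero ((isUnit_iff_isUnit_det _).mp ?_)⟩
  exact linearIndependent_rows_iff_isUnit.mp (hli.comp _ e.symm.injective)

lemma exists_det_submatrix_ne_zero {R : Type*} [CommRing R] [IsDomain R] {M : Matrix κ ι R}
    (hM : ∀ u, M *ᵥ u = 0 → u = 0) : ∃ r : ι → κ, (M.submatrix r id).det ≠ 0 := by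
  let F := FractionRing R
  have hMF (w : ι → F) (hw : M.map (algebraMap R F) *ᵥ w = 0) : w = 0 := by
    obtain ⟨s, hs⟩ := IsLocalization.exist_integer_multiples_of_finite (nonZeroDivisors R) w
    choose u hu using hs
    have huw : algebraMap R F ∘ u = (s : R) • w := funext hu
    have hu0 : u = 0 := hM u <| funext fun j => IsFractionRing.injective R F <| by
      rw [RingHom.map_mulVec, huw, mulVec_smul, hw, smul_zero, Pi.zero_apply, Pi.zero_apply,
        map_zero]
    refine (smul_eq_zero.mp (?_ : (s : R) • w = 0)).resolve_left (nonZeroDivisors.ne_zero s.2)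
    rw [← huw, hu0]
    exact funext fun _ => map_zero _
  obtain ⟨r, hr⟩ := exists_det_submatrix_ne_zero_of_field hMF
  refine ⟨r, fun h => hr ?_⟩
  rw [submatrix_map, ← RingHom.mapMatrix_apply, ← RingHom.map_det, h, map_zero]

end Minors

/-! ### Linear maps depending affinely on parameters -/

section AffineFamilies

open Matrix

variable {K τ β V W : Type*} [Field K] [AddCommGroup V] [Module K V] [AddCommGroup W] [Module K W]

/-- The vector `∑_b u_b(c) e_b`, depending polynomially on the parameter `c`. -/
noncomputable def polyFamily [Fintype β] (u : β → MvPolynomial τ K) (e : β → V) (c : τ → K) : V :=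
  ∑ b, eval c (u b) • e b

lemma map_polyFamily [Fintype β] (f : V →ₗ[K] W) (u : β → MvPolynomial τ K) (e : β → V)
    (c : τ → K) : f (polyFamily u e c) = polyFamily u (f ∘ e) c := by
  simp [polyFamily]

lemma eventually_polyFamily_ne_zero [Fintype β] {u : β → MvPolynomial τ K} (e : Module.Basis β K V)
    (hu : u ≠ 0) : ∀ᶠ c in zariskiGeneric τ K, polyFamily u e c ≠ 0 := by
  obtain ⟨b, hb⟩ := Function.ne_iff.mp hu
  filter_upwards [eventually_eval_ne_zero hb] with c hc h0
  exact hc (Fintype.linearIndependent_iff.mp e.linearIndependent _ h0 b)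

variable [Fintype τ]

/-- The linear map `T₀ + ∑ₖ cₖ Tₖ`, depending affinely on the parameter `c`. -/
def affineFamily (T₀ : V →ₗ[K] W) (T : τ → V →ₗ[K] W) (c : τ → K) : V →ₗ[K] W :=
  T₀ + ∑ k, c k • T k

/-- The matrix of an affine family of linear maps, with polynomial entries. Its rows are indexed by
all linear functionals on the codomain, which avoids the choice of a basis there. -/
noncomputable def coeffMatrix (T₀ : V →ₗ[K] W) (T : τ → V →ₗ[K] W) (e : β → V) :
    Matrix (Module.Dual K W) β (MvPolynomial τ K) :=
  Matrix.of fun φ b => C (φ (T₀ (e b))) + ∑ k, C (φ (T k (e b))) * X k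

variable {T₀ : V →ₗ[K] W} {T : τ → V →ₗ[K] W} {u : β → MvPolynomial τ K} {e : β → V}

lemma affineFamily_apply (c : τ → K) (v : V) :
    affineFamily T₀ T c v = T₀ v + ∑ k, c k • T k v := by
  simp [affineFamily]

lemma eval_coeffMatrix (c : τ → K) (φ : Module.Dual K W) (b : β) :
    eval c (coeffMatrix T₀ T e φ b) = φ (affineFamily T₀ T c (e b)) := by
  simp [coeffMatrix, affineFamily_apply, mul_comm]

variable [Fintype β]

lemma map_coeffMatrix_mulVec (c : τ → K) (x : β → K) (φ : Module.Dual K W) :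
    ((coeffMatrix T₀ T e).map (eval c) *ᵥ x) φ = φ (affineFamily T₀ T c (∑ b, x b • e b)) := by
  simp [mulVec, dotProduct, eval_coeffMatrix, mul_comm]

lemma eventually_injective_of_det_ne_zero [DecidableEq β] (e : Module.Basis β K V)
    {r : β → Module.Dual K W} (hr : ((coeffMatrix T₀ T e).submatrix r id).det ≠ 0) :
    ∀ᶠ c in zariskiGeneric τ K, Function.Injective (affineFamily T₀ T c) := by
  filter_upwards [eventually_eval_ne_zero hr] with c hc
  refine (injective_iff_map_eq_zero _).mpr fun v hv => ?_
  rw [RingHom.map_det, RingHom.mapMatrix_apply] at hc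
  have hrepr : ⇑(e.repr v) = 0 := eq_zero_of_mulVec_eq_zero hc <| funext fun i => by
    have h := map_coeffMatrix_mulVec (T₀ := T₀) (T := T) (e := e) c (e.repr v) (r i)
    rwa [e.sum_repr, hv, map_zero] at h
  exact e.repr.map_eq_zero_iff.mp (Finsupp.coe_eq_zero.mp hrepr)

lemma eventually_injective [FiniteDimensional K V] {c₀ : τ → K}
    (h : Function.Injective (affineFamily T₀ T c₀)) :
    ∀ᶠ c in zariskiGeneric τ K, Function.Injective (affineFamily T₀ T c) := by
  let e := Module.finBasis K V
  obtain ⟨r, hr⟩ := exists_det_submatrix_ne_zero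
    (M := (coeffMatrix T₀ T e).map (eval c₀)) fun x hx => by
      have hv : affineFamily T₀ T c₀ (∑ b, x b • e b) = 0 :=
        (Module.forall_dual_apply_eq_zero_iff K _).mp fun φ => by
          rw [← map_coeffMatrix_mulVec, hx, Pi.zero_apply]
      rw [map_eq_zero_iff _ h] at hv
      exact funext (Fintype.linearIndependent_iff.mp e.linearIndependent x hv)
  refine eventually_injective_of_det_ne_zero e (r := r) fun h0 => hr ?_
  rw [submatrix_map, ← RingHom.mapMatrix_apply, ← RingHom.map_det, h0, map_zero]

lemma eventually_surjective [FiniteDimensional K W] {c₀ : τ → K}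
    (h : Function.Surjective (affineFamily T₀ T c₀)) :
    ∀ᶠ c in zariskiGeneric τ K, Function.Surjective (affineFamily T₀ T c) := by
  have hdual (c : τ → K) : (affineFamily T₀ T c).dualMap =
      affineFamily T₀.dualMap (fun k => (T k).dualMap) c := by
    ext φ v
    simp [affineFamily_apply]
  simp only [← LinearMap.dualMap_injective_iff, hdual] at h ⊢
  exact eventually_injective h

lemma exists_polyFamily_mem_ker (e : Module.Basis β K V)
    (h : ¬ ∀ᶠ c in zariskiGeneric τ K, Function.Injective (affineFamily T₀ T c)) :
    ∃ u : β → MvPolynomial τ K, u ≠ 0 ∧ ∀ c, affineFamily T₀ T c (polyFamily u e c) = 0 := by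
  classical
  obtain ⟨u, hMu, hu⟩ : ∃ u, coeffMatrix T₀ T e *ᵥ u = 0 ∧ u ≠ 0 := by
    contrapose! h
    obtain ⟨r, hr⟩ := exists_det_submatrix_ne_zero h
    exact eventually_injective_of_det_ne_zero e hr
  refine ⟨u, hu, fun c => (Module.forall_dual_apply_eq_zero_iff K _).mp fun φ => ?_⟩
  rw [polyFamily, ← map_coeffMatrix_mulVec]
  exact (RingHom.map_mulVec (eval c) _ u φ).symm.trans (by rw [hMu, Pi.zero_apply, map_zero])

lemma affineFamily_polyFamily_pderiv [Infinite K]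
    (h : ∀ c, affineFamily T₀ T c (polyFamily u e c) = 0) (k : τ) (c : τ → K) :
    affineFamily T₀ T c (polyFamily (pderiv k ∘ u) e c) = - T k (polyFamily u e c) := by
  classical
  refine eq_neg_of_add_eq_zero_left ((Module.forall_dual_apply_eq_zero_iff K _).mp fun φ => ?_)
  have hzero : ∑ b, coeffMatrix T₀ T e φ b * u b = 0 := MvPolynomial.funext fun c => by
    rw [map_zero, ← map_zero φ, ← h c]
    simp [polyFamily, eval_coeffMatrix, mul_comm]
  have hcoeff (b : β) : pderiv k (coeffMatrix T₀ T e φ b) = C (φ (T k (e b))) := by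
    simp [coeffMatrix, Pi.single_apply]
  have hderiv := congrArg (eval c ∘ pderiv k) hzero
  simp only [Function.comp_apply, map_sum, Derivation.leibniz, smul_eq_mul, map_add, map_mul,
    hcoeff, eval_C, eval_coeffMatrix, map_zero, Finset.sum_add_distrib] at hderiv
  simpa [polyFamily, mul_comm] using hderiv

end AffineFamilies

/-! ### Polynomial vectors with parallel derivatives -/

section Parallel

variable {K σ τ ι : Type*} [Field K]

lemma eval_mul_eval_comm_of_wronskian_eq_zero [CharZero K] {A B : Polynomial K}
    (h : A.wronskian B = 0) (s t : K) : A.eval s * B.eval t = A.eval t * B.eval s := by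
  classical
  by_cases h0 : A = 0 ∧ B = 0
  · simp [h0.1]
  obtain ⟨a, ha⟩ := EuclideanDomain.gcd_dvd_left A B
  obtain ⟨b, hb⟩ := EuclideanDomain.gcd_dvd_right A B
  have hbezout := EuclideanDomain.gcd_eq_gcd_ab A B
  have hg : EuclideanDomain.gcd A B ≠ 0 := fun hg => h0 (EuclideanDomain.gcd_eq_zero_iff.mp hg)
  set g := EuclideanDomain.gcd A B
  have hab : IsCoprime a b := ⟨EuclideanDomain.gcdA A B, EuclideanDomain.gcdB A B,
    mul_left_cancel₀ hg (by
      linear_combination -hbezout - EuclideanDomain.gcdA A B * ha - EuclideanDomain.gcdB A B * hb)⟩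
  have hw : g ^ 2 * a.wronskian b = 0 := by
    rw [ha, hb, Polynomial.wronskian, Polynomial.derivative_mul, Polynomial.derivative_mul] at h
    rw [Polynomial.wronskian]
    linear_combination h
  obtain ⟨ha', hb'⟩ := hab.wronskian_eq_zero_iff.mp
    ((mul_eq_zero.mp hw).resolve_left (pow_ne_zero _ hg))
  rw [ha, hb, Polynomial.eq_C_of_derivative_eq_zero ha', Polynomial.eq_C_of_derivative_eq_zero hb']
  simp only [Polynomial.eval_mul, Polynomial.eval_C]
  ring

/-- The restriction `t ↦ q (α + t β)` of a polynomial to a parametrized line. -/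
noncomputable def alongLine (α β : τ → K) : MvPolynomial τ K →ₐ[K] Polynomial K :=
  aeval fun k => Polynomial.C (α k) + Polynomial.X * Polynomial.C (β k)

lemma eval_alongLine (α β : τ → K) (q : MvPolynomial τ K) (t : K) :
    (alongLine α β q).eval t = eval (α + t • β) q := by
  rw [← Polynomial.coe_aeval_eq_eval, ← aeval_eq_eval]
  exact DFunLike.congr_fun (MvPolynomial.algHom_ext
    (f := (Polynomial.aeval t).comp (alongLine α β)) (g := aeval (α + t • β))
    fun k => by simp [alongLine, mul_comm t]) q

lemma derivative_alongLine [Fintype τ] (α β : τ → K) (q : MvPolynomial τ K) :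
    (alongLine α β q).derivative = ∑ k, Polynomial.C (β k) * alongLine α β (pderiv k q) := by
  classical
  induction q using MvPolynomial.induction_on with
  | C r => simp [alongLine, Polynomial.algebraMap_eq]
  | add p q hp hq => simp only [map_add, hp, hq, mul_add, Finset.sum_add_distrib]
  | mul_X p i hp =>
    have hX : alongLine α β (X i) = Polynomial.C (α i) + Polynomial.X * Polynomial.C (β i) :=
      aeval_X _ i
    have hX' : (alongLine α β (X i)).derivative = Polynomial.C (β i) := by simp [hX]
    have hpderiv (k : τ) : alongLine α β (pderiv k (p * X i)) =
        (if i = k then alongLine α β p else 0) +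
          alongLine α β (X i) * alongLine α β (pderiv k p) := by
      rw [Derivation.leibniz, pderiv_X, map_add, smul_eq_mul, smul_eq_mul, map_mul, map_mul]
      by_cases h : i = k <;> simp [h]
    simp only [map_mul, Polynomial.derivative_mul, hp, hX', hpderiv, mul_add,
      Finset.sum_add_distrib, mul_ite, mul_zero, Finset.sum_ite_eq, Finset.mem_univ, if_true,
      mul_left_comm _ (alongLine α β (X i)), ← Finset.mul_sum]
    ring

lemma eval_mul_eval_comm_of_parallel_derivative [CharZero K] [Fintype τ]
    {h : ι → MvPolynomial τ K} {δ : MvPolynomial τ K} {α β : τ → K} (hα : eval α δ ≠ 0)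
    (hpar : ∀ t : K, eval (α + t • β) δ ≠ 0 → ∃ r : K, ∀ i,
      ∑ k, β k * eval (α + t • β) (pderiv k (h i)) = r * eval (α + t • β) (h i)) (i j : ι) :
    eval α (h i) * eval (α + β) (h j) = eval (α + β) (h i) * eval α (h j) := by
  have hδ : alongLine α β δ ≠ 0 := fun h0 => hα <| by
    simpa [h0] using (eval_alongLine α β δ 0).symm
  have hw : alongLine α β δ * (alongLine α β (h i)).wronskian (alongLine α β (h j)) = 0 := by
    refine Polynomial.funext fun t => ?_
    rw [Polynomial.eval_mul, eval_alongLine, Polynomial.eval_zero, mul_eq_zero, or_iff_not_imp_left]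
    intro ht
    obtain ⟨r, hr⟩ := hpar t ht
    simp only [Polynomial.wronskian, derivative_alongLine, Polynomial.eval_sub,
      Polynomial.eval_mul, Polynomial.eval_finsetSum, Polynomial.eval_C, eval_alongLine, hr]
    ring
  simpa [eval_alongLine] using eval_mul_eval_comm_of_wronskian_eq_zero
    ((mul_eq_zero.mp hw).resolve_left hδ) 0 1

lemma exists_primitive_of_ne_zero {R : Type*} [CommRing R] [IsDomain R]
    [UniqueFactorizationMonoid R] [Finite ι] {v : ι → R} (hv : v ≠ 0) :
    ∃ (g : R) (s : ι → R), v = g • s ∧ ∀ w : ι → R,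
      (∀ i j, w i * v j = w j * v i) → ∃ r : R, w = r • s := by
  classical
  cases nonempty_fintype ι
  obtain ⟨i₀, hi₀⟩ := Function.ne_iff.mp hv
  let _ : StrongNormalizationMonoid R := UniqueFactorizationMonoid.strongNormalizationMonoid
  let _ : NormalizedGCDMonoid R := UniqueFactorizationMonoid.toNormalizedGCDMonoid R
  obtain ⟨s, hs, hs1⟩ := Finset.extract_gcd (s := Finset.univ) v ⟨i₀, Finset.mem_univ _⟩
  set g := Finset.univ.gcd v
  have hvs (i : ι) : v i = g * s i := hs i (Finset.mem_univ _)
  obtain ⟨hg, hsi₀⟩ : g ≠ 0 ∧ s i₀ ≠ 0 := mul_ne_zero_iff.mp (hvs i₀ ▸ hi₀)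
  refine ⟨g, s, funext hvs, fun w hw => ?_⟩
  have hws (i j : ι) : w i * s j = w j * s i := mul_left_cancel₀ hg (by
    rw [mul_left_comm, mul_left_comm g, ← hvs, ← hvs, hw])
  have hdvd : s i₀ ∣ w i₀ := by
    have h : s i₀ ∣ Finset.univ.gcd fun i => w i₀ * s i :=
      Finset.dvd_gcd fun i _ => ⟨w i, by rw [hws, mul_comm]⟩
    have hassoc := (Finset.gcd_mul_left' Finset.univ s (w i₀)).dvd
    rw [hs1, mul_one] at hassoc
    exact h.trans hassoc
  obtain ⟨r, hr⟩ := hdvd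
  refine ⟨r, funext fun i => mul_right_cancel₀ hsi₀ ?_⟩
  rw [hws i i₀, hr, Pi.smul_apply, smul_eq_mul]
  ring

lemma exists_eq_C_of_eval_ne_zero [IsAlgClosed K] [Finite σ] [Nontrivial σ]
    {h : MvPolynomial σ K} (hz : ∀ P ≠ 0, eval P h ≠ 0) : ∃ k : K, k ≠ 0 ∧ h = C k := by
  classical
  have hdvd (i : σ) : ∃ m : ℕ, h ∣ X i ^ m := by
    have hrad : (X i : MvPolynomial σ K) ∈ (Ideal.span {h}).radical := by
      rw [← vanishingIdeal_zeroLocus_eq_radical (K := K), mem_vanishingIdeal_iff]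
      intro P hP
      obtain rfl : P = 0 := by
        by_contra hne
        exact hz P hne (mem_zeroLocus_iff.mp hP h (Ideal.mem_span_singleton_self _))
      simp
    exact hrad.imp fun m => Ideal.mem_span_singleton.mp
  obtain ⟨i, j, hij⟩ := exists_pair_ne σ
  obtain ⟨m, hm⟩ := hdvd i
  obtain ⟨m', hm'⟩ := hdvd j
  obtain ⟨l, -, hl⟩ := (dvd_prime_pow (X_prime (R := K) (i := i)) m).mp hm
  have hl0 : l = 0 := by
    by_contra hne
    obtain ⟨q, hq⟩ := (dvd_pow_self (X i) hne).trans (hl.symm.dvd.trans hm')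
    simpa [hij] using congrArg (eval (Pi.single j (1 : K))) hq
  rw [hl0, pow_zero, associated_one_iff_isUnit] at hl
  obtain ⟨k, hk, hhk⟩ := isUnit_iff_eq_C_of_isReduced.mp hl
  exact ⟨k, hk.ne_zero, hhk⟩

lemma exists_eq_smul_of_eval_eq_smul [IsAlgClosed K] [Finite σ] [Nontrivial σ] [Finite ι]
    {f g : ι → MvPolynomial σ K} (hf : ∀ P ≠ 0, eval P ∘ f ≠ 0)
    (hfg : ∀ P ≠ 0, ∃ r : K, r ≠ 0 ∧ eval P ∘ f = r • (eval P ∘ g)) :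
    ∃ k : K, f = (C k : MvPolynomial σ K) • g := by
  have hcomm (i j : ι) : g i * f j = g j * f i := by
    obtain ⟨x⟩ := (inferInstance : Nonempty σ)
    refine mul_left_cancel₀ (X_ne_zero x) (MvPolynomial.funext fun P => ?_)
    rcases eq_or_ne P 0 with rfl | hP
    · simp
    obtain ⟨r, -, hr⟩ := hfg P hP
    have hri (i : ι) : eval P (f i) = r * eval P (g i) := congrFun hr i
    simp only [map_mul, hri]
    ring
  obtain ⟨P, hP⟩ := exists_ne (0 : σ → K)
  have hf0 : f ≠ 0 := fun h => hf P hP (by rw [h]; exact funext fun _ => map_zero _)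
  obtain ⟨h, s, rfl, hprim⟩ := exists_primitive_of_ne_zero hf0
  obtain ⟨h', rfl⟩ := hprim g hcomm
  obtain ⟨k, -, rfl⟩ := exists_eq_C_of_eval_ne_zero (h := h) fun P hP h0 =>
    hf P hP (funext fun i => by simp [h0])
  obtain ⟨k', hk', rfl⟩ := exists_eq_C_of_eval_ne_zero (h := h') fun P hP h0 => by
    obtain ⟨r, -, hr⟩ := hfg P hP
    exact hf P hP (hr.trans (funext fun i => by simp [h0]))
  exact ⟨k / k', by rw [← smul_assoc, smul_eq_mul, ← C_mul, div_mul_cancel₀ _ hk']⟩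

end Parallel

/-! ### Descent from the incidence variety to the plane -/

section Descent

open Matrix

variable {K σ τ ι κ : Type*} [Field K]

lemma exists_cross_eq {P c : Fin 3 → K} (hP : P ≠ 0) (h : c ⬝ᵥ P = 0) : ∃ v, P ⨯₃ v = c := by
  obtain ⟨k, hk⟩ := Function.ne_iff.mp hP
  refine ⟨c ⨯₃ Pi.single k (P k)⁻¹, ?_⟩
  rw [cross_cross_eq_smul_sub_smul', h, zero_smul, sub_zero, dotProduct_single,
    mul_inv_cancel₀ hk, one_smul]

/-- The value at `(c, P)` of a tuple of polynomials in `c` whose coefficients are polynomials in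
`P`. -/
noncomputable def biEval (f : ι → MvPolynomial τ (MvPolynomial σ K)) (c : τ → K) (P : σ → K) :
    ι → K :=
  fun i => eval c (map (eval P) (f i))

/-- The polynomial in `c` with coefficients polynomials in `P` whose value at `(c, P)` is the value
at `P` of the tuple `∑_b u_b(c) q_b`. -/
noncomputable def universalFamily {β : Type*} [Fintype β] (u : β → MvPolynomial τ K)
    (q : β → ι → MvPolynomial σ K) : ι → MvPolynomial τ (MvPolynomial σ K) :=
  fun i => ∑ b, map C (u b) * C (q b i)

lemma biEval_universalFamily {β : Type*} [Fintype β] (u : β → MvPolynomial τ K)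
    (q : β → ι → MvPolynomial σ K) (c : τ → K) (P : σ → K) :
    biEval (universalFamily u q) c P = eval P ∘ polyFamily u q c := by
  have hC : (eval P).comp C = RingHom.id K := RingHom.ext fun r => eval_C r
  funext i
  simp [biEval, universalFamily, polyFamily, MvPolynomial.map_map, hC, smul_eval]

lemma pderiv_universalFamily {β : Type*} [Fintype β] (u : β → MvPolynomial τ K)
    (q : β → ι → MvPolynomial σ K) (k : τ) :
    (fun i => pderiv k (universalFamily u q i)) = universalFamily (pderiv k ∘ u) q := by
  funext i
  simp [universalFamily, pderiv_map, mul_comm]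

/-- The restriction of a tuple `f` of polynomials in a line `c` and a point `P` to the pairs where
`c` is the line through `P` and the fixed point `v`. -/
noncomputable def alongPencil (f : ι → MvPolynomial (Fin 3) (MvPolynomial (Fin 3) K))
    (v : Fin 3 → K) : ι → MvPolynomial (Fin 3) K :=
  fun i => eval (X ⨯₃ (C ∘ v)) (f i)

variable {f : ι → MvPolynomial (Fin 3) (MvPolynomial (Fin 3) K)}

lemma eval_comp_cross (P v : Fin 3 → K) :
    eval P ∘ (X ⨯₃ (C ∘ v) : Fin 3 → MvPolynomial (Fin 3) K) = P ⨯₃ v := by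
  funext k
  fin_cases k <;> simp [cross_apply]

lemma eval_alongPencil (v P : Fin 3 → K) :
    eval P ∘ alongPencil f v = biEval f (P ⨯₃ v) P := by
  funext i
  rw [biEval, eval_map, ← eval_comp_cross]
  exact eval₂_comp_left (eval P) (RingHom.id _) _ (f i)

lemma mulVec_alongPencil [Infinite K] [Fintype ι] {Φ : Matrix κ ι (MvPolynomial (Fin 3) K)}
    (hker : ∀ c P, c ⬝ᵥ P = 0 → Φ.map (eval P) *ᵥ biEval f c P = 0) (v : Fin 3 → K) :
    Φ *ᵥ alongPencil f v = 0 := by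
  refine funext fun j => MvPolynomial.funext fun P => ?_
  rw [← Function.comp_apply (f := eval P), ← mulVec_eval, eval_alongPencil, hker _ _ (by
    rw [dotProduct_comm, dot_self_cross])]
  simp

lemma alongPencil_parallel [CharZero K] {δ : MvPolynomial (Fin 3) K}
    (hpar : ∀ c, eval c δ ≠ 0 → ∀ P β, P ≠ 0 → c ⬝ᵥ P = 0 → β ⬝ᵥ P = 0 →
      ∃ r : K, ∑ k, β k • biEval (fun i => pderiv k (f i)) c P = r • biEval f c P)
    {v₀ P₀ : Fin 3 → K} (hδ : eval (P₀ ⨯₃ v₀) δ ≠ 0) (v : Fin 3 → K) (i j : ι) :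
    alongPencil f v i * alongPencil f v₀ j = alongPencil f v j * alongPencil f v₀ i := by
  set E : MvPolynomial (Fin 3) K := aeval (X ⨯₃ (C ∘ v₀)) δ
  have hE (P : Fin 3 → K) : eval P E = eval (P ⨯₃ v₀) δ := by
    rw [← eval_comp_cross]
    exact comp_aeval_apply _ (aeval P) δ
  have hE0 : E ≠ 0 := fun h => hδ (by rw [← hE, h, map_zero])
  refine sub_eq_zero.mp ((mul_eq_zero.mp (MvPolynomial.funext fun P => ?_ :
    E * (_ - _) = 0)).resolve_left hE0)
  have hF (v : Fin 3 → K) (i : ι) : eval P (alongPencil f v i) = biEval f (P ⨯₃ v) P i :=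
    congrFun (eval_alongPencil v P) i
  simp only [map_mul, map_sub, map_zero, hF, hE, mul_eq_zero, or_iff_not_imp_left]
  intro hPδ
  rcases eq_or_ne P 0 with rfl | hP
  · simp [mul_comm]
  have hline : P ⨯₃ v₀ + P ⨯₃ (v - v₀) = P ⨯₃ v := by rw [← map_add, add_sub_cancel]
  have key := eval_mul_eval_comm_of_parallel_derivative (h := fun i => map (eval P) (f i))
    (β := P ⨯₃ (v - v₀)) hPδ (fun t ht => by
      obtain ⟨r, hr⟩ := hpar _ ht P (P ⨯₃ (v - v₀)) hP
        (by rw [← map_smul, ← map_add, dotProduct_comm, dot_self_cross])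
        (by rw [dotProduct_comm, dot_self_cross])
      exact ⟨r, fun i => by simpa [biEval, pderiv_map] using congrFun hr i⟩) j i
  rw [hline] at key
  simp only [biEval]
  linear_combination key

theorem exists_section_of_parallel [CharZero K] [Fintype ι]
    {Φ : Matrix κ ι (MvPolynomial (Fin 3) K)}
    (hker : ∀ c P, c ⬝ᵥ P = 0 → Φ.map (eval P) *ᵥ biEval f c P = 0)
    (hne : ∀ᶠ c in zariskiGeneric (Fin 3) K, ∀ P, P ≠ 0 → c ⬝ᵥ P = 0 → biEval f c P ≠ 0)
    (hpar : ∀ᶠ c in zariskiGeneric (Fin 3) K, ∀ P β, P ≠ 0 → c ⬝ᵥ P = 0 → β ⬝ᵥ P = 0 →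
      ∃ r : K, ∑ k, β k • biEval (fun i => pderiv k (f i)) c P = r • biEval f c P) :
    ∃ s : ι → MvPolynomial (Fin 3) K, Φ *ᵥ s = 0 ∧ ∀ᶠ c in zariskiGeneric (Fin 3) K,
      ∀ P, P ≠ 0 → c ⬝ᵥ P = 0 → ∃ r : K, r ≠ 0 ∧ biEval f c P = r • (eval P ∘ s) := by
  obtain ⟨δ, hδ, hparδ⟩ := eventually_zariskiGeneric_iff.mp hpar
  obtain ⟨c₀, hne₀, hc₀⟩ := (hne.and (eventually_eval_ne_zero hδ)).exists
  obtain ⟨P₀, hP₀, hcP₀⟩ := exists_ne_zero_dotProduct_eq_zero c₀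
  rw [dotProduct_comm] at hcP₀
  obtain ⟨v₀, rfl⟩ := exists_cross_eq hP₀ hcP₀
  have hF₀ : alongPencil f v₀ ≠ 0 := fun h => hne₀ P₀ hP₀ hcP₀ <| by
    rw [← eval_alongPencil, h]
    exact funext fun _ => map_zero _
  obtain ⟨g, s, hgs, hprim⟩ := exists_primitive_of_ne_zero hF₀
  refine ⟨s, ?_, hne.mono fun c hc P hP hcP => ?_⟩
  · have hker₀ := mulVec_alongPencil hker v₀
    rw [hgs, mulVec_smul] at hker₀
    exact (smul_eq_zero.mp hker₀).resolve_left fun h => hF₀ (by rw [hgs, h, zero_smul])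
  · obtain ⟨v, rfl⟩ := exists_cross_eq hP hcP
    obtain ⟨r, hr⟩ := hprim _ (alongPencil_parallel hparδ hc₀ v)
    have hval : biEval f (P ⨯₃ v) P = eval P r • (eval P ∘ s) := by
      rw [← eval_alongPencil, hr]
      exact funext fun i => map_mul _ _ _
    exact ⟨eval P r, fun h => hc P hP hcP (by rw [hval, h, zero_smul]), hval⟩

end Descent

/-! ### Restriction to lines in the plane -/

section Lines

open Filter Matrix

variable {K : Type*} [Field K] {c P : Fin 3 → K}

lemma linform_ne_zero (hc : c ≠ 0) : linform c ≠ 0 := by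
  obtain ⟨k, hk⟩ := Function.ne_iff.mp hc
  intro h
  exact hk (by simpa [linform, Pi.single_apply] using congrArg (eval (Pi.single k (1 : K))) h)

lemma eval_linform (c P : Fin 3 → K) : eval P (linform c) = c ⬝ᵥ P := by
  simp [linform, dotProduct]

/-- The coordinates `x`, `y`, `z` on the line `c₀ x + c₁ y + c₂ z = 0`, parametrized by `x` and `y`;
this is only meaningful for `c₂ ≠ 0`. -/
noncomputable def lineCoordinates (c : Fin 3 → K) : Fin 3 → MvPolynomial (Fin 2) K :=
  ![X 0, X 1, -(C (c 0 / c 2) * X 0 + C (c 1 / c 2) * X 1)]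

/-- Restriction of ternary polynomials to the line `c₀ x + c₁ y + c₂ z = 0` with coordinates `x`
and `y`. -/
noncomputable def lineRestriction (c : Fin 3 → K) :
    MvPolynomial (Fin 3) K →ₐ[K] MvPolynomial (Fin 2) K :=
  aeval (lineCoordinates c)

/-- Polynomials in `x` and `y` regarded as polynomials in `x`, `y` and `z`. -/
noncomputable abbrev extendByZ : MvPolynomial (Fin 2) K →ₐ[K] MvPolynomial (Fin 3) K :=
  rename Fin.castSucc

lemma isHomog_lineCoordinates (c : Fin 3 → K) (i : Fin 3) : IsHomog (lineCoordinates c i) 1 := by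
  fin_cases i
  · exact IsHomog.X 0
  · exact IsHomog.X 1
  · exact (((IsHomog.X 0).C_mul _).add ((IsHomog.X 1).C_mul _)).neg

lemma lineRestriction_extendByZ (c : Fin 3 → K) (f : MvPolynomial (Fin 2) K) :
    lineRestriction c (extendByZ f) = f := by
  have h : (lineRestriction c).comp extendByZ = AlgHom.id K (MvPolynomial (Fin 2) K) := by
    ext1 i
    fin_cases i <;> simp [lineRestriction, lineCoordinates]
  exact DFunLike.congr_fun h f

lemma lineRestriction_comp_extendByZ {ι : Type*} (c : Fin 3 → K) (v : ι → MvPolynomial (Fin 2) K) :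
    lineRestriction c ∘ extendByZ ∘ v = v := by
  funext i
  simp only [Function.comp_apply, lineRestriction_extendByZ]

lemma eval_lineRestriction (hc : c 2 ≠ 0) (hP : c ⬝ᵥ P = 0) (r : MvPolynomial (Fin 3) K) :
    eval (P ∘ Fin.castSucc) (lineRestriction c r) = eval P r := by
  have h : (aeval (R := K) (P ∘ Fin.castSucc)).comp (lineRestriction c) = aeval P := by
    rw [dotProduct, Fin.sum_univ_three] at hP
    ext i
    fin_cases i
    · simp [lineRestriction, lineCoordinates]
    · simp [lineRestriction, lineCoordinates]
    · simp only [lineRestriction, lineCoordinates, Fin.reduceFinMk, AlgHom.comp_apply, aeval_X,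
        cons_val, map_neg, map_add, map_mul, algHom_C, Algebra.algebraMap_self, RingHom.id_apply,
        Function.comp_apply, Fin.castSucc_zero, Fin.castSucc_one]
      field_simp
      linear_combination -hP
  exact DFunLike.congr_fun h r

lemma eval_comp_extendByZ {ι : Type*} (P : Fin 3 → K) (v : ι → MvPolynomial (Fin 2) K) :
    eval P ∘ extendByZ ∘ v = eval (P ∘ Fin.castSucc) ∘ v :=
  funext fun i => eval_rename Fin.castSucc P (v i)

lemma comp_castSucc_ne_zero (hc : c 2 ≠ 0) (hP0 : P ≠ 0) (hP : c ⬝ᵥ P = 0) :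
    P ∘ Fin.castSucc ≠ 0 := by
  contrapose! hP0
  have h₀ : P 0 = 0 := congrFun hP0 0
  have h₁ : P 1 = 0 := congrFun hP0 1
  have h₂ : P 2 = 0 := by simpa [dotProduct, Fin.sum_univ_three, h₀, h₁, hc] using hP
  funext i
  fin_cases i <;> assumption

lemma extendByZ_lineRestriction_X_two (hc : c 2 ≠ 0) :
    extendByZ (lineRestriction c (X 2)) = X 2 - C (c 2)⁻¹ * linform c := by
  have h₀ : C (c 0 / c 2) = C (c 2)⁻¹ * (C (c 0) : MvPolynomial (Fin 3) K) := by
    rw [← C_mul, div_eq_inv_mul]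
  have h₁ : C (c 1 / c 2) = C (c 2)⁻¹ * (C (c 1) : MvPolynomial (Fin 3) K) := by
    rw [← C_mul, div_eq_inv_mul]
  have h₂ : C (c 2)⁻¹ * (C (c 2) : MvPolynomial (Fin 3) K) = 1 := by
    rw [← C_mul, inv_mul_cancel₀ hc, C_1]
  simp only [lineRestriction, lineCoordinates, aeval_X, cons_val, map_neg, map_add, map_mul,
    algHom_C, algebraMap_eq, rename_X, Fin.castSucc_zero, Fin.castSucc_one, h₀, h₁, linform,
    Fin.sum_univ_three]
  linear_combination X 2 * h₂

lemma lineRestriction_linform (hc : c 2 ≠ 0) : lineRestriction c (linform c) = 0 := by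
  have h := congrArg (lineRestriction c) (extendByZ_lineRestriction_X_two hc)
  rw [lineRestriction_extendByZ, map_sub, eq_comm, sub_eq_self, map_mul, algHom_C] at h
  exact (mul_eq_zero.mp h).resolve_left (by simpa using hc)

lemma linform_dvd_sub_extendByZ_lineRestriction (hc : c 2 ≠ 0) (r : MvPolynomial (Fin 3) K) :
    linform c ∣ r - extendByZ (lineRestriction c r) := by
  rw [← Ideal.mem_span_singleton, ← Ideal.Quotient.eq]
  let π := Ideal.Quotient.mkₐ K (Ideal.span {linform c})
  have hπ : π (linform c) = 0 :=
    Ideal.Quotient.eq_zero_iff_mem.mpr (Ideal.mem_span_singleton_self _)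
  refine DFunLike.congr_fun (MvPolynomial.algHom_ext (f := π)
    (g := π.comp (extendByZ.comp (lineRestriction c))) fun i => ?_) r
  fin_cases i
  · simp [lineRestriction, lineCoordinates]
  · simp [lineRestriction, lineCoordinates]
  · change π (X 2) = π (extendByZ (lineRestriction c (X 2)))
    rw [extendByZ_lineRestriction_X_two hc, map_sub, map_mul, hπ, mul_zero, sub_zero]

variable {ι κ : Type*} {a : ι → ℤ} {b : κ → ℤ} {d : ℤ}

lemma lineRestriction_mem_gradedPiece {v : ι → MvPolynomial (Fin 3) K} (hv : v ∈ gradedPiece a d) :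
    lineRestriction c ∘ v ∈ gradedPiece a d :=
  mem_gradedPiece.mpr fun i => (mem_gradedPiece.mp hv i).aeval (isHomog_lineCoordinates c)

lemma extendByZ_mem_gradedPiece {v : ι → MvPolynomial (Fin 2) K} (hv : v ∈ gradedPiece a d) :
    extendByZ ∘ v ∈ gradedPiece a d :=
  mem_gradedPiece.mpr fun i => (mem_gradedPiece.mp hv i).rename _

lemma exists_eq_linform_smul (hc : c 2 ≠ 0) {v : ι → MvPolynomial (Fin 3) K}
    (hv : v ∈ gradedPiece a d) (h : lineRestriction c ∘ v = 0) :
    ∃ g ∈ gradedPiece a (d - 1), v = linform c • g := by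
  have hdvd (i : ι) : linform c ∣ v i := by
    simpa [show lineRestriction c (v i) = 0 from congrFun h i] using
      linform_dvd_sub_extendByZ_lineRestriction hc (v i)
  choose g hg using hdvd
  obtain rfl : v = linform c • g := funext hg
  exact ⟨g, mem_gradedPiece_of_smul_mem (homog_linform c)
    (linform_ne_zero fun h0 => hc (congrFun h0 2)) hv (by ring), rfl⟩

variable [Fintype ι] {Φ : Matrix κ ι (MvPolynomial (Fin 3) K)}

lemma mulVec_lineRestriction (c : Fin 3 → K) (v : ι → MvPolynomial (Fin 3) K) :
    Φ.map (lineRestriction c) *ᵥ (lineRestriction c ∘ v) = lineRestriction c ∘ (Φ *ᵥ v) :=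
  funext fun j => (RingHom.map_mulVec (lineRestriction c).toRingHom Φ v j).symm

lemma mulVec_extendByZ (c : Fin 3 → K) (v : ι → MvPolynomial (Fin 2) K) :
    lineRestriction c ∘ (Φ *ᵥ (extendByZ ∘ v)) = Φ.map (lineRestriction c) *ᵥ v := by
  rw [← mulVec_lineRestriction, lineRestriction_comp_extendByZ]

lemma SurjectiveInDegree.map_lineRestriction (h : SurjectiveInDegree Φ a b d) (c : Fin 3 → K) :
    SurjectiveInDegree (Φ.map (lineRestriction c)) a b d := by
  intro g hg
  obtain ⟨u, hu, hug⟩ := h _ (extendByZ_mem_gradedPiece hg)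
  refine ⟨lineRestriction c ∘ u, lineRestriction_mem_gradedPiece hu, ?_⟩
  rw [mulVec_lineRestriction, hug]
  exact lineRestriction_comp_extendByZ c g

lemma exists_syzygy_lift (hΦ : ∀ j i, IsHomog (Φ j i) (a i - b j))
    {s : ι → MvPolynomial (Fin 3) K} (hs : Φ *ᵥ s = 0)
    (hd : lineRestriction c ∘ s ∈ gradedPiece a d) :
    ∃ t ∈ syzygies Φ a d, lineRestriction c ∘ t = lineRestriction c ∘ s := by
  refine ⟨gradedComponent a d s, gradedComponent_mem_syzygies hΦ hs, funext fun i => ?_⟩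
  rw [← gradedComponent_eq_self hd]
  exact (homogComponent_aeval (isHomog_lineCoordinates c) (s i)).symm

end Lines

/-! ### The family of syzygies on varying lines -/

section LineSyzygies

open Filter Matrix

variable {K ι κ : Type*} [Field K] {a : ι → ℤ} {b : κ → ℤ} {e : ℤ}

/-- The space of pairs `(f, g)` with `f` a tuple of forms on the line and `g` a tuple of forms on
the plane in which the syzygies of degree `e` on all lines are realized at once. -/
abbrev LinePairs (K : Type*) [Field K] (a : ι → ℤ) (b : κ → ℤ) (e : ℤ) : Type _ :=
  ↥(gradedPiece a e : Submodule K (ι → MvPolynomial (Fin 2) K)) ×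
    ↥(gradedPiece b (e - 1) : Submodule K (κ → MvPolynomial (Fin 3) K))

/-- The first component of a pair, with its entries regarded as ternary forms. -/
noncomputable def extendFst (a : ι → ℤ) (b : κ → ℤ) (e : ℤ) :
    LinePairs K a b e →ₗ[K] ι → MvPolynomial (Fin 3) K :=
  extendByZ.toLinearMap.compLeft ι ∘ₗ Submodule.subtype _ ∘ₗ LinearMap.fst K _ _

/-- The map `(f, g) ↦ - x_k g`. -/
noncomputable def negXSmulSnd (a : ι → ℤ) (b : κ → ℤ) (e : ℤ) (k : Fin 3) :
    LinePairs K a b e →ₗ[K] κ → MvPolynomial (Fin 3) K :=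
  -((LinearMap.lsmul (MvPolynomial (Fin 3) K) (κ → MvPolynomial (Fin 3) K)
    (X k)).restrictScalars K ∘ₗ Submodule.subtype _ ∘ₗ LinearMap.snd K _ _)

lemma extendFst_apply (x : LinePairs K a b e) : extendFst a b e x = extendByZ ∘ x.1.1 := rfl

lemma negXSmulSnd_apply (k : Fin 3) (x : LinePairs K a b e) :
    negXSmulSnd a b e k x = -((X k : MvPolynomial (Fin 3) K) • x.2.1) := rfl

variable [Fintype ι]

/-- The map `(f, g) ↦ Φ f - (c₀ x + c₁ y + c₂ z) g`. Its kernel is identified by the first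
projection with the syzygies of degree `e` on the line `c₀ x + c₁ y + c₂ z = 0`. -/
noncomputable def lineSyzygyMap (Φ : Matrix κ ι (MvPolynomial (Fin 3) K)) (a : ι → ℤ) (b : κ → ℤ)
    (e : ℤ) : (Fin 3 → K) → LinePairs K a b e →ₗ[K] κ → MvPolynomial (Fin 3) K :=
  affineFamily (Φ.mulVecLin.restrictScalars K ∘ₗ extendFst a b e) (negXSmulSnd a b e)

variable {c : Fin 3 → K} {Φ : Matrix κ ι (MvPolynomial (Fin 3) K)} {x : LinePairs K a b e}

lemma lineSyzygyMap_apply (c : Fin 3 → K) (x : LinePairs K a b e) :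
    lineSyzygyMap Φ a b e c x = Φ *ᵥ (extendByZ ∘ x.1.1) - linform c • x.2.1 := by
  have hlin : linform c • x.2.1 = ∑ k, c k • (X k : MvPolynomial (Fin 3) K) • x.2.1 := by
    rw [linform, Finset.sum_smul]
    exact Finset.sum_congr rfl fun k _ => by rw [← smul_eq_C_mul, smul_assoc]
  rw [lineSyzygyMap, affineFamily_apply, sub_eq_add_neg (Φ *ᵥ _), hlin, ← Finset.sum_neg_distrib]
  simp only [negXSmulSnd_apply, smul_neg]
  rfl

lemma mulVec_fst_of_lineSyzygyMap_eq (hc : c 2 ≠ 0) {y : κ → MvPolynomial (Fin 3) K}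
    (hx : lineSyzygyMap Φ a b e c x = y) :
    Φ.map (lineRestriction c) *ᵥ x.1.1 = lineRestriction c ∘ y := by
  rw [lineSyzygyMap_apply, sub_eq_iff_eq_add] at hx
  rw [← mulVec_extendByZ, hx]
  funext j
  simp [lineRestriction_linform hc]

lemma fst_mem_syzygies (hc : c 2 ≠ 0) (hx : lineSyzygyMap Φ a b e c x = 0) :
    x.1.1 ∈ syzygies (Φ.map (lineRestriction c)) a e :=
  mem_syzygies.mpr ⟨x.1.2, by
    rw [mulVec_fst_of_lineSyzygyMap_eq hc hx]
    exact funext fun _ => map_zero _⟩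

lemma eq_zero_of_fst_eq_zero (hc : c 2 ≠ 0) (hx : lineSyzygyMap Φ a b e c x = 0)
    (h : x.1.1 = 0) : x = 0 := by
  have hext : extendByZ ∘ (0 : ι → MvPolynomial (Fin 2) K) = 0 := funext fun _ => map_zero _
  rw [lineSyzygyMap_apply, h, hext, mulVec_zero, zero_sub, neg_eq_zero, smul_eq_zero] at hx
  exact Prod.ext (Subtype.ext h) (Subtype.ext
    (hx.resolve_left (linform_ne_zero fun h0 => hc (congrFun h0 2))))

lemma lineSyzygyMap_injective_iff (hΦ : ∀ j i, IsHomog (Φ j i) (a i - b j)) (hc : c 2 ≠ 0) :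
    Function.Injective (lineSyzygyMap Φ a b e c) ↔
      syzygies (Φ.map (lineRestriction c)) a e = ⊥ := by
  rw [injective_iff_map_eq_zero, Submodule.eq_bot_iff]
  constructor
  · intro h f hf
    obtain ⟨g, hg, hfg⟩ := exists_eq_linform_smul hc
      (mulVec_mem_gradedPiece hΦ (extendByZ_mem_gradedPiece hf.1))
      ((mulVec_extendByZ c f).trans (mem_syzygies.mp hf).2)
    have := h (⟨f, hf.1⟩, ⟨g, hg⟩) (by rw [lineSyzygyMap_apply, hfg, sub_self])
    exact congrArg (fun x : LinePairs K a b e => x.1.1) this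
  · exact fun h x hx => eq_zero_of_fst_eq_zero hc hx (h _ (fst_mem_syzygies hc hx))

lemma exists_sum_smul_eval_eq_smul (hc : c 2 ≠ 0) {p : ℤ} {f : ι → MvPolynomial (Fin 2) K}
    {h : κ → MvPolynomial (Fin 2) K} {y : Fin 3 → ι → MvPolynomial (Fin 2) K}
    (hf : ∀ g ∈ syzygies (Φ.map (lineRestriction c)) a (p + 1),
      g ∈ Submodule.span (MvPolynomial (Fin 2) K) {f})
    (hy : ∀ k, y k ∈ gradedPiece a p)
    (hyh : ∀ k, Φ.map (lineRestriction c) *ᵥ y k = lineRestriction c (X k) • h)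
    {P β : Fin 3 → K} (hP : P ≠ 0) (hcP : c ⬝ᵥ P = 0) (hβP : β ⬝ᵥ P = 0) :
    ∃ r : K, ∑ k, β k • (eval (P ∘ Fin.castSucc) ∘ y k) = r • (eval (P ∘ Fin.castSucc) ∘ f) := by
  obtain ⟨l, hl⟩ := Function.ne_iff.mp hP
  set D : ι → MvPolynomial (Fin 2) K := ∑ k, (C (β k) : MvPolynomial (Fin 2) K) • y k
  have hlin : lineRestriction c (linform β) = ∑ k, C (β k) * lineRestriction c (X k) := by
    simp [linform]
  have hD : Φ.map (lineRestriction c) *ᵥ D = lineRestriction c (linform β) • h := by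
    simp only [D, mulVec_sum, mulVec_smul, hyh, hlin, Finset.sum_smul, mul_smul]
  have hsyz : lineRestriction c (X l) • D - lineRestriction c (linform β) • y l ∈
      syzygies (Φ.map (lineRestriction c)) a (p + 1) := by
    refine mem_syzygies.mpr ⟨sub_mem ?_ ?_, ?_⟩
    · exact smul_mem_gradedPiece ((IsHomog.X l).aeval (isHomog_lineCoordinates c))
        (sum_mem fun k _ => smul_mem_gradedPiece (isWeightedHomogeneous_C _ _) (hy k) (zero_add _))
        (add_comm _ _)
    · exact smul_mem_gradedPiece (IsHomog.aeval (homog_linform β) (isHomog_lineCoordinates c))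
        (hy l) (add_comm _ _)
    · rw [mulVec_sub, mulVec_smul, mulVec_smul, hD, hyh, smul_comm, sub_self]
  obtain ⟨q, hq⟩ := Submodule.mem_span_singleton.mp (hf _ hsyz)
  refine ⟨(P l)⁻¹ * eval (P ∘ Fin.castSucc) q, funext fun i => ?_⟩
  have hqi := congrArg (eval (P ∘ Fin.castSucc)) (congrFun hq i)
  simp only [Pi.smul_apply, Pi.sub_apply, smul_eq_mul, map_mul, map_sub,
    eval_lineRestriction hc hcP, eval_X, eval_linform, hβP, zero_mul, sub_zero] at hqi
  simp only [Pi.smul_apply, smul_eq_mul, Function.comp_apply, mul_assoc, hqi]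
  rw [inv_mul_cancel_left₀ hl]
  simp [D]

end LineSyzygies

/-! ### Lifting syzygies from general lines to the plane -/

section LineDescent

open Filter Matrix

variable {K ι κ : Type*} [Field K] {a : ι → ℤ} {b : κ → ℤ} {p d : ℤ} {c P : Fin 3 → K}

lemma eval_comp_lineCoordinates_castSucc (c : Fin 3 → K) (Q : Fin 2 → K) :
    (eval Q ∘ lineCoordinates c) ∘ Fin.castSucc = Q := by
  funext i
  fin_cases i <;> simp [lineCoordinates]

lemma dotProduct_eval_comp_lineCoordinates (hc : c 2 ≠ 0) (Q : Fin 2 → K) :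
    c ⬝ᵥ (eval Q ∘ lineCoordinates c) = 0 := by
  simp only [dotProduct, lineCoordinates, Fin.sum_univ_three, Function.comp_apply, cons_val,
    map_neg, map_add, map_mul, eval_C, eval_X]
  field_simp
  ring

variable {ν : Type*} [Fintype ν] {u : ν → MvPolynomial (Fin 3) K} {q : ν → LinePairs K a b p}

lemma biEval_universalFamily_extendFst (u : ν → MvPolynomial (Fin 3) K)
    (q : ν → LinePairs K a b p) (c P : Fin 3 → K) :
    biEval (universalFamily u (extendFst a b p ∘ q)) c P =
      eval (P ∘ Fin.castSucc) ∘ (polyFamily u q c).1.1 := by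
  rw [biEval_universalFamily, ← map_polyFamily, extendFst_apply, eval_comp_extendByZ]

variable [Fintype ι] {Φ : Matrix κ ι (MvPolynomial (Fin 3) K)}

lemma mulVec_biEval_universalFamily (hu : ∀ c, lineSyzygyMap Φ a b p c (polyFamily u q c) = 0)
    (hP : c ⬝ᵥ P = 0) :
    Φ.map (eval P) *ᵥ biEval (universalFamily u (extendFst a b p ∘ q)) c P = 0 := by
  have h := hu c
  rw [lineSyzygyMap_apply, sub_eq_zero] at h
  rw [biEval_universalFamily_extendFst, ← eval_comp_extendByZ, mulVec_eval, h]
  funext j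
  simp [eval_linform, hP]

lemma mulVec_fst_polyFamily_pderiv [Infinite K]
    (hu : ∀ c, lineSyzygyMap Φ a b p c (polyFamily u q c) = 0) (hc : c 2 ≠ 0) (k : Fin 3) :
    Φ.map (lineRestriction c) *ᵥ (polyFamily (pderiv k ∘ u) q c).1.1 =
      lineRestriction c (X k) • (lineRestriction c ∘ (polyFamily u q c).2.1) := by
  have h : lineSyzygyMap Φ a b p c (polyFamily (pderiv k ∘ u) q c) =
      (X k : MvPolynomial (Fin 3) K) • (polyFamily u q c).2.1 := by
    rw [lineSyzygyMap, affineFamily_polyFamily_pderiv hu, negXSmulSnd_apply, neg_neg]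
  rw [mulVec_fst_of_lineSyzygyMap_eq hc h]
  funext j
  simp only [Function.comp_apply, Pi.smul_apply, smul_eq_mul, map_mul]

lemma exists_sum_smul_biEval_pderiv_universalFamily [Fintype κ] [Infinite K]
    (hcard : Fintype.card ι = Fintype.card κ + 2)
    (hsurj : ∀ᶠ e in atTop, SurjectiveInDegree (Φ.map (lineRestriction c)) a b e)
    (hmin : syzygies (Φ.map (lineRestriction c)) a (p - 1) = ⊥)
    (hd : ¬ SurjectiveInDegree (Φ.map (lineRestriction c)) a b d) (hpd : p ≤ d)
    (hu : ∀ c, lineSyzygyMap Φ a b p c (polyFamily u q c) = 0) (hc : c 2 ≠ 0)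
    (hne : polyFamily u q c ≠ 0) {β : Fin 3 → K} (hP : P ≠ 0) (hcP : c ⬝ᵥ P = 0)
    (hβP : β ⬝ᵥ P = 0) :
    ∃ r : K, ∑ k, β k •
        biEval (fun i => pderiv k (universalFamily u (extendFst a b p ∘ q) i)) c P =
      r • biEval (universalFamily u (extendFst a b p ∘ q)) c P := by
  have hf0 : (polyFamily u q c).1.1 ≠ 0 := mt (eq_zero_of_fst_eq_zero hc (hu c)) hne
  obtain ⟨r, hr⟩ := exists_sum_smul_eval_eq_smul hc
    (fun g hg => mem_span_of_mem_syzygies hcard hsurj hd (fst_mem_syzygies hc (hu c)) hf0 hmin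
      (by lia) hg)
    (fun k => (polyFamily (pderiv k ∘ u) q c).1.2)
    (mulVec_fst_polyFamily_pderiv hu hc) hP hcP hβP
  refine ⟨r, ?_⟩
  simp only [pderiv_universalFamily, biEval_universalFamily_extendFst, hr]

lemma exists_forall_lt_syzygies_eq_bot {σ R : Type*} [CommRing R] (a : ι → ℤ) :
    ∃ E : ℤ, ∀ (A : Matrix κ ι (MvPolynomial σ R)), ∀ d < E, syzygies A a d = ⊥ := by
  obtain ⟨E, hE⟩ := (Set.finite_range a).bddBelow
  refine ⟨E, fun A d hd => (Submodule.eq_bot_iff _).mpr fun f hf => funext fun i => ?_⟩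
  by_contra hne
  have := (mem_gradedPiece.mp hf.1 i).nonneg hne
  have := hE ⟨i, rfl⟩
  lia

variable [Fintype κ]

theorem exists_section_eval_eq_smul [CharZero K]
    (hΦ : ∀ j i, IsHomog (Φ j i) (a i - b j)) (hcard : Fintype.card ι = Fintype.card κ + 2)
    (hsurj : ∀ᶠ e in atTop, SurjectiveInDegree Φ a b e)
    (hmin : ∀ᶠ c in zariskiGeneric (Fin 3) K, syzygies (Φ.map (lineRestriction c)) a (p - 1) = ⊥)
    (hp : ¬ ∀ᶠ c in zariskiGeneric (Fin 3) K, syzygies (Φ.map (lineRestriction c)) a p = ⊥)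
    (hd : ∀ᶠ c in zariskiGeneric (Fin 3) K,
      ¬ SurjectiveInDegree (Φ.map (lineRestriction c)) a b d) (hpd : p ≤ d) :
    ∃ s : ι → MvPolynomial (Fin 3) K, Φ *ᵥ s = 0 ∧ ∀ᶠ c in zariskiGeneric (Fin 3) K,
      ∃ f ∈ syzygies (Φ.map (lineRestriction c)) a p, f ≠ 0 ∧ ∀ Q : Fin 2 → K, Q ≠ 0 →
        ∃ r : K, r ≠ 0 ∧ eval Q ∘ f = r • (eval Q ∘ lineRestriction c ∘ s) := by
  have hsurj' (c : Fin 3 → K) := hsurj.mono fun e he => he.map_lineRestriction c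
  have hc₂ := eventually_apply_ne_zero K (2 : Fin 3)
  let q := Module.finBasis K (LinePairs K a b p)
  obtain ⟨u, hu0, hu⟩ : ∃ u, u ≠ 0 ∧ ∀ c, lineSyzygyMap Φ a b p c (polyFamily u q c) = 0 :=
    exists_polyFamily_mem_ker q fun h => hp <| by
      filter_upwards [h, hc₂] with c hc hc₂ using (lineSyzygyMap_injective_iff hΦ hc₂).mp hc
  have hne := eventually_polyFamily_ne_zero q hu0
  obtain ⟨s, hs, hsf⟩ := exists_section_of_parallel (Φ := Φ)
    (f := universalFamily u (extendFst a b p ∘ q))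
    (fun c P hP => mulVec_biEval_universalFamily hu hP)
    (by
      filter_upwards [hc₂, hne, hmin] with c hc hne hmin P hP hcP
      rw [biEval_universalFamily_extendFst]
      exact eval_ne_zero_of_minimal (fst_mem_syzygies hc (hu c))
        (mt (eq_zero_of_fst_eq_zero hc (hu c)) hne) hmin (comp_castSucc_ne_zero hc hP hcP))
    (by
      filter_upwards [hc₂, hne, hmin, hd] with c hc hne hmin hd P β hP hcP hβP using
        exists_sum_smul_biEval_pderiv_universalFamily hcard (hsurj' c) hmin hd hpd hu hc hne hP
          hcP hβP)
  refine ⟨s, hs, ?_⟩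
  filter_upwards [hc₂, hne, hsf] with c hc hne hsf
  refine ⟨(polyFamily u q c).1.1, fst_mem_syzygies hc (hu c),
    mt (eq_zero_of_fst_eq_zero hc (hu c)) hne, fun Q hQ => ?_⟩
  have hQ' := eval_comp_lineCoordinates_castSucc c Q
  have hcQ := dotProduct_eval_comp_lineCoordinates hc Q
  obtain ⟨r, hr0, hr⟩ := hsf (eval Q ∘ lineCoordinates c)
    (fun h => hQ (by rw [← hQ', h]; rfl)) hcQ
  rw [biEval_universalFamily_extendFst, hQ'] at hr
  refine ⟨r, hr0, hr.trans (congrArg (r • ·) (funext fun i => ?_))⟩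
  simp only [Function.comp_apply, ← eval_lineRestriction hc hcQ (s i), hQ']

theorem eventually_exists_syzygy_lift_of_minimal [CharZero K] [IsAlgClosed K]
    (hΦ : ∀ j i, IsHomog (Φ j i) (a i - b j)) (hcard : Fintype.card ι = Fintype.card κ + 2)
    (hsurj : ∀ᶠ e in atTop, SurjectiveInDegree Φ a b e)
    (hmin : ∀ᶠ c in zariskiGeneric (Fin 3) K, syzygies (Φ.map (lineRestriction c)) a (p - 1) = ⊥)
    (hp : ¬ ∀ᶠ c in zariskiGeneric (Fin 3) K, syzygies (Φ.map (lineRestriction c)) a p = ⊥)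
    (hd : ∀ᶠ c in zariskiGeneric (Fin 3) K,
      ¬ SurjectiveInDegree (Φ.map (lineRestriction c)) a b d) (hpd : p ≤ d) :
    ∀ᶠ c in zariskiGeneric (Fin 3) K, ∀ g ∈ syzygies (Φ.map (lineRestriction c)) a d,
      ∃ t ∈ syzygies Φ a d, lineRestriction c ∘ t = g := by
  obtain ⟨s, hs, hsf⟩ := exists_section_eval_eq_smul hΦ hcard hsurj hmin hp hd hpd
  filter_upwards [hsf, hmin, hd] with c ⟨f, hf, hf0, hfs⟩ hmin hd g hg
  obtain ⟨k, rfl⟩ := exists_eq_smul_of_eval_eq_smul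
    (fun P hP => eval_ne_zero_of_minimal hf hf0 hmin hP) hfs
  obtain ⟨h, rfl⟩ := Submodule.mem_span_singleton.mp <| mem_span_of_mem_syzygies hcard
    (hsurj.mono fun e he => he.map_lineRestriction c) hd hf hf0 hmin (by lia) hg
  have hlift : lineRestriction c ∘ ((extendByZ h * C k) • s) =
      h • (C k : MvPolynomial (Fin 2) K) • lineRestriction c ∘ s := by
    funext i
    simp [lineRestriction_extendByZ, mul_assoc]
  rw [← hlift] at hg ⊢
  exact exists_syzygy_lift hΦ (by rw [mulVec_smul, hs, smul_zero]) hg.1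

theorem eventually_exists_syzygy_lift [CharZero K] [IsAlgClosed K]
    (hΦ : ∀ j i, IsHomog (Φ j i) (a i - b j)) (hcard : Fintype.card ι = Fintype.card κ + 2)
    (hsurj : ∀ᶠ e in atTop, SurjectiveInDegree Φ a b e)
    (hd : ∀ᶠ c in zariskiGeneric (Fin 3) K,
      ¬ SurjectiveInDegree (Φ.map (lineRestriction c)) a b d) :
    ∀ᶠ c in zariskiGeneric (Fin 3) K, ∀ g ∈ syzygies (Φ.map (lineRestriction c)) a d,
      ∃ t ∈ syzygies Φ a d, lineRestriction c ∘ t = g := by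
  by_cases hd₀ : ∀ᶠ c in zariskiGeneric (Fin 3) K, syzygies (Φ.map (lineRestriction c)) a d = ⊥
  · filter_upwards [hd₀] with c hc g hg
    rw [hc, Submodule.mem_bot] at hg
    exact ⟨0, zero_mem _, by rw [hg]; exact funext fun _ => map_zero _⟩
  obtain ⟨E, hE⟩ := exists_forall_lt_syzygies_eq_bot (κ := κ) (σ := Fin 2) (R := K) a
  obtain ⟨p, hp, hleast⟩ := Int.exists_least_of_bdd
    (P := fun e => ¬ ∀ᶠ c in zariskiGeneric (Fin 3) K,
      syzygies (Φ.map (lineRestriction c)) a e = ⊥)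
    ⟨E, fun e he => le_of_not_gt fun hlt => he (.of_forall fun c => hE _ e hlt)⟩ ⟨d, hd₀⟩
  refine eventually_exists_syzygy_lift_of_minimal hΦ hcard hsurj ?_ hp hd (hleast d hd₀)
  by_contra h
  have := hleast _ h
  lia

end LineDescent

/-! ### Multiplication by a linear form on the cokernel -/

section Cokernel

open Filter Matrix

variable {K : Type*} [Field K] {n : ℕ} {a : Fin (n + 2) → ℤ} {b : Fin n → ℤ}
  {Φ : Matrix (Fin n) (Fin (n + 2)) (MvPolynomial (Fin 3) K)} {c : Fin 3 → K} {d : ℤ}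

lemma mulLmap_injective_of_syzygy_lift (hc : c 2 ≠ 0)
    (h : ∀ g ∈ syzygies (Φ.map (lineRestriction c)) a d,
      ∃ t ∈ syzygies Φ a d, lineRestriction c ∘ t = g) :
    Function.Injective (mulLmap n a b Φ (linform c) (homog_linform c) d) := by
  rw [injective_iff_map_eq_zero]
  intro x hx
  obtain ⟨⟨g, hg⟩, rfl⟩ := Submodule.Quotient.mk_surjective _ x
  rw [mulLmap, Submodule.mapQ_apply, Submodule.Quotient.mk_eq_zero] at hx
  obtain ⟨u, hu, hug : Φ *ᵥ u = linform c • g⟩ := hx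
  obtain ⟨t, ⟨ht, htΦ : Φ *ᵥ t = 0⟩, htu⟩ := h (lineRestriction c ∘ u)
    (mem_syzygies.mpr ⟨lineRestriction_mem_gradedPiece hu, by
      rw [mulVec_lineRestriction, hug]
      funext j
      simp [lineRestriction_linform hc]⟩)
  obtain ⟨v, hv, huv⟩ := exists_eq_linform_smul hc (sub_mem hu ht)
    (by rw [map_comp_sub, htu, sub_self])
  rw [Submodule.Quotient.mk_eq_zero]
  refine ⟨v, hv, smul_right_injective _ (linform_ne_zero fun h0 => hc (congrFun h0 2)) ?_⟩
  change linform c • (Φ *ᵥ v) = linform c • g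
  rw [← mulVec_smul, ← huv, mulVec_sub, htΦ, sub_zero, hug]

lemma mulLmap_surjective_of_surjectiveInDegree (hΦ : ∀ j i, homog (Φ j i) (a i - b j))
    (hc : c 2 ≠ 0) (h : SurjectiveInDegree (Φ.map (lineRestriction c)) a b d) :
    Function.Surjective (mulLmap n a b Φ (linform c) (homog_linform c) d) := by
  intro x
  obtain ⟨⟨g, hg⟩, rfl⟩ := Submodule.Quotient.mk_surjective _ x
  obtain ⟨u, hu, hug⟩ := h _ (lineRestriction_mem_gradedPiece hg)
  have hu' : extendByZ ∘ u ∈ gradedPiece a d := extendByZ_mem_gradedPiece hu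
  obtain ⟨v, hv, hgv⟩ := exists_eq_linform_smul hc
    (sub_mem hg (mulVec_mem_gradedPiece hΦ hu'))
    (by rw [map_comp_sub, mulVec_extendByZ, hug, sub_self])
  refine ⟨Submodule.Quotient.mk ⟨v, hv⟩, ?_⟩
  rw [mulLmap, Submodule.mapQ_apply, eq_comm, Submodule.Quotient.eq]
  exact ⟨extendByZ ∘ u, hu', (sub_eq_of_eq_add (sub_eq_iff_eq_add'.mp hgv)).symm⟩

lemma mulLmap_linform (n : ℕ) (a : Fin (n + 2) → ℤ) (b : Fin n → ℤ)
    (Φ : Matrix (Fin n) (Fin (n + 2)) (MvPolynomial (Fin 3) K)) (d : ℤ) (c : Fin 3 → K) :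
    mulLmap n a b Φ (linform c) (homog_linform c) d =
      affineFamily 0 (fun k => mulLmap n a b Φ (X k) (IsHomog.X k) d) c := by
  refine LinearMap.ext fun x => ?_
  obtain ⟨g, rfl⟩ := Submodule.Quotient.mk_surjective _ x
  simp only [affineFamily_apply, LinearMap.zero_apply, zero_add, mulLmap, Submodule.mapQ_apply,
    ← Submodule.Quotient.mk_smul, Fin.sum_univ_three, ← Submodule.Quotient.mk_add]
  congr 1
  ext1
  funext j
  simp [mulLres, mulL_apply, linform, Fin.sum_univ_three, smul_eq_C_mul]
  ring

theorem eventually_mulLmap_injective_or_surjective [IsAlgClosed K] [CharZero K]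
    (hΦ : ∀ j i, homog (Φ j i) (a i - b j)) (hfin : FiniteColength n a b Φ) (d : ℤ) :
    ∀ᶠ c in zariskiGeneric (Fin 3) K,
      Function.Injective (mulLmap n a b Φ (linform c) (homog_linform c) d) ∨
        Function.Surjective (mulLmap n a b Φ (linform c) (homog_linform c) d) := by
  have hc₂ := eventually_apply_ne_zero K (2 : Fin 3)
  by_cases hd : ∀ᶠ c in zariskiGeneric (Fin 3) K,
      ¬ SurjectiveInDegree (Φ.map (lineRestriction c)) a b d
  · have hlift := eventually_exists_syzygy_lift hΦ (by simp) (eventually_atTop.mpr hfin) hd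
    filter_upwards [hc₂, hlift] with c hc₂ hc using
      .inl (mulLmap_injective_of_syzygy_lift hc₂ hc)
  · obtain ⟨c₀, hc₀, hc₀₂⟩ := ((not_eventually.mp hd).and_eventually hc₂).exists
    have hsurj := mulLmap_surjective_of_surjectiveInDegree hΦ hc₀₂ (not_not.mp hc₀)
    have : FiniteDimensional K ↥(degPiece (K := K) n b d) :=
      inferInstanceAs (FiniteDimensional K (gradedPiece b d))
    simp only [mulLmap_linform] at hsurj ⊢
    filter_upwards [eventually_surjective hsurj] with c hc using .inr hc

lemma subsingleton_Md_of_lt (h : ∀ j, d < b j) : Subsingleton (Md n a b Φ d) := by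
  refine Submodule.Quotient.subsingleton_iff.mpr (eq_top_iff.mpr fun ⟨g, hg⟩ _ => ?_)
  obtain rfl : g = 0 := funext fun j => by
    by_contra hne
    have := (mem_gradedPiece.mp hg j).nonneg hne
    have := h j
    lia
  exact zero_mem _

lemma subsingleton_Md_of_le
    (h : degPiece n b d ≤ Submodule.map (phiK n Φ) (degPiece (n + 2) a d)) :
    Subsingleton (Md n a b Φ d) :=
  Submodule.Quotient.subsingleton_iff.mpr (Submodule.comap_subtype_eq_top.mpr h)

end Cokernel

end WeakLefschetz

/-- If `M = coker φ` is a finite length graded module over `K[x,y,z]`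
(`φ` a degree-zero graded map `⊕_{i=1}^{n+2} R(-a_i) → ⊕_{j=1}^n R(-b_j)`), then `M` has the
Weak Lefschetz Property: there is a linear form `L` such that multiplication by `L` from each
graded piece of `M` to the next is injective or surjective. -/
theorem statement0 {K : Type*} [Field K] [IsAlgClosed K] [CharZero K]
    (n : ℕ) (a : Fin (n + 2) → ℤ) (b : Fin n → ℤ)
    (Φ : Matrix (Fin n) (Fin (n + 2)) (MvPolynomial (Fin 3) K))
    (hΦ : ∀ j i, homog (Φ j i) (a i - b j))
    (hfin : FiniteColength n a b Φ) :
    ∃ (L : MvPolynomial (Fin 3) K) (hL : homog L 1),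
      ∀ d : ℤ, Function.Injective (mulLmap n a b Φ L hL d) ∨
        Function.Surjective (mulLmap n a b Φ L hL d) := by
  have ⟨D, hD⟩ := hfin
  obtain ⟨E, hE⟩ := (Set.finite_range b).bddBelow
  obtain ⟨c, hc⟩ := ((Filter.eventually_all_finset (Finset.Icc E D)).mpr fun d _ =>
    WeakLefschetz.eventually_mulLmap_injective_or_surjective hΦ hfin d).exists
  refine ⟨linform c, homog_linform c, fun d => ?_⟩
  rcases lt_or_ge d E with hdE | hdE
  · have := WeakLefschetz.subsingleton_Md_of_lt (a := a) (Φ := Φ) (d := d - 1)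
      fun j => (by lia : d - 1 < E).trans_le (hE ⟨j, rfl⟩)
    exact .inl (Function.injective_of_subsingleton _)
  rcases le_or_gt D d with hDd | hDd
  · have := WeakLefschetz.subsingleton_Md_of_le (hD d hDd)
    exact .inr (Function.surjective_to_subsingleton _)
  · exact hc d (Finset.mem_Icc.mpr ⟨hdE, hDd.le⟩)
end

section
/- Assume a−b is even and N_m = 0 (i.e. the associated normalized rank-2 bundle is stable with c_1 = 0). Then for a general linear form L ∈ R_1, the multiplication map ×L : M_{d−1} → M_d is injective for all d ≤ m−1 and surjective for all d ≥ m−1. -/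
open MvPolynomial

/-!
Restrict `N = ker Φ` to a general line `L = 0`. A nonzero vector of minimal degree in the kernel
over the generic line of the plane would destabilise the bundle by Grauert and Mülich's argument:
differentiating it along the pencil of lines through a point gives another kernel vector, one degree
higher, and by the degree bound the two are proportional. The primitive vector therefore does not
move in the pencil, depends only on the point, and comes from a nonzero element of `N` in the same
degree. So the kernel over the generic line vanishes in degree `m - 1`, and over a general line
as well because this is the nonvanishing of a maximal minor.

On such a line, the kernel is zero up to degree `m - 1`, which gives injectivity of `×L`, and as the
degrees of the two line bundles in the split kernel sum to zero, the restricted matrix is surjective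
from degree `m - 1` on, which gives surjectivity.
-/

noncomputable section

namespace GrauertMulich

section Line

open Filter

variable {A : Type*} [CommRing A] {ι κ : Type*} {a : κ → ℤ} {b : ι → ℤ} {e : ℤ}

/-- The univariate polynomials of degree at most the integer `e`; only `0` if `e < 0`. -/
def intDegreeLE (A : Type*) [CommRing A] (e : ℤ) : Submodule A (Polynomial A) :=
  Polynomial.degreeLT A (e + 1).toNat

lemma mem_intDegreeLE {p : Polynomial A} :
    p ∈ intDegreeLE A e ↔ ∀ l : ℕ, e < l → p.coeff l = 0 := by
  rw [intDegreeLE, Polynomial.mem_degreeLT, Polynomial.degree_lt_iff_coeff_zero]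
  exact forall_congr' fun l => imp_congr_left (by omega)

lemma intDegreeLE_mono : Monotone (intDegreeLE A) := fun _ _ h =>
  Polynomial.degreeLT_mono (by omega)

lemma mul_mem_intDegreeLE {p q : Polynomial A} {r s : ℤ} (hp : p ∈ intDegreeLE A r)
    (hq : q ∈ intDegreeLE A s) : p * q ∈ intDegreeLE A (r + s) := by
  rw [mem_intDegreeLE] at *
  intro l hl
  rw [Polynomial.coeff_mul]
  refine Finset.sum_eq_zero fun x hx => ?_
  have hx := Finset.HasAntidiagonal.mem_antidiagonal.1 hx
  by_cases hr : r < x.1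
  · rw [hp _ hr, zero_mul]
  · rw [hq _ (by omega), mul_zero]

lemma X_mul_mem_intDegreeLE {p : Polynomial A} :
    Polynomial.X * p ∈ intDegreeLE A (e + 1) ↔ p ∈ intDegreeLE A e := by
  simp only [mem_intDegreeLE]
  refine ⟨fun h l hl => ?_, fun h l hl => ?_⟩
  · simpa using h (l + 1) (by push_cast; omega)
  · cases l with
    | zero => simp
    | succ l => simpa using h l (by push_cast at hl; omega)

/-- The degree-`e` graded piece of `⊕ O(-a i)` over the line `P¹` over `A`, in the affine coordinate
of the line. -/
def linePiece (A : Type*) [CommRing A] (a : κ → ℤ) (e : ℤ) : Submodule A (κ → Polynomial A) :=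
  Submodule.pi Set.univ fun i => intDegreeLE A (e - a i)

lemma mem_linePiece {v : κ → Polynomial A} :
    v ∈ linePiece A a e ↔ ∀ i, v i ∈ intDegreeLE A (e - a i) := by
  simp [linePiece, Submodule.mem_pi]

lemma linePiece_mono : Monotone (linePiece A a) := fun _ _ h _ hv =>
  mem_linePiece.2 fun i => intDegreeLE_mono (by omega) (mem_linePiece.1 hv i)

lemma X_smul_mem_linePiece {v : κ → Polynomial A} :
    (Polynomial.X : Polynomial A) • v ∈ linePiece A a (e + 1) ↔ v ∈ linePiece A a e := by
  simp only [mem_linePiece, Pi.smul_apply, smul_eq_mul]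
  refine forall_congr' fun i => ?_
  rw [show e + 1 - a i = e - a i + 1 by ring, X_mul_mem_intDegreeLE]

/-- The coefficients of an element of `linePiece A a e`. -/
def linePieceEquiv (A : Type*) [CommRing A] (a : κ → ℤ) (e : ℤ) :
    linePiece A a e ≃ₗ[A] ((Σ i, Fin (e - a i + 1).toNat) → A) where
  toFun v p := (v.1 p.1).coeff p.2
  map_add' _ _ := by ext; simp
  map_smul' _ _ := by ext; simp
  invFun x := ⟨fun i => (Polynomial.degreeLTEquiv A _).symm fun l => x ⟨i, l⟩,
    mem_linePiece.2 fun _ => Subtype.prop _⟩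
  left_inv v := by
    ext1
    funext i
    exact congrArg Subtype.val
      ((Polynomial.degreeLTEquiv A _).symm_apply_apply ⟨v.1 i, mem_linePiece.1 v.2 i⟩)
  right_inv x := by
    funext ⟨i, l⟩
    exact congrFun ((Polynomial.degreeLTEquiv A _).apply_symm_apply fun l => x ⟨i, l⟩) l

/-- The matrix `Ψ` defines a map of degree zero `⊕ O(-a i) → ⊕ O(-b j)` over the line. -/
def HasLineDegree (a : κ → ℤ) (b : ι → ℤ) (Ψ : Matrix ι κ (Polynomial A)) : Prop :=
  ∀ j i, Ψ j i ∈ intDegreeLE A (a i - b j)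

variable [Fintype κ] {Ψ : Matrix ι κ (Polynomial A)}

lemma mulVec_mem_linePiece (hΨ : HasLineDegree a b Ψ) {v : κ → Polynomial A}
    (hv : v ∈ linePiece A a e) : Ψ.mulVec v ∈ linePiece A b e := by
  rw [mem_linePiece] at *
  refine fun j => sum_mem fun i _ => ?_
  convert mul_mem_intDegreeLE (hΨ j i) (hv i) using 1
  ring_nf

/-- The degree-`e` graded piece of the kernel of `Ψ` over the line. -/
def lineKer (a : κ → ℤ) (Ψ : Matrix ι κ (Polynomial A)) (e : ℤ) :
    Submodule A (κ → Polynomial A) :=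
  linePiece A a e ⊓ LinearMap.ker (Ψ.mulVecLin.restrictScalars A)

lemma mem_lineKer {v : κ → Polynomial A} :
    v ∈ lineKer a Ψ e ↔ v ∈ linePiece A a e ∧ Ψ.mulVec v = 0 := Iff.rfl

lemma lineKer_mono : Monotone (lineKer a Ψ) := fun _ _ h =>
  inf_le_inf_right _ (linePiece_mono h)

lemma smul_mem_lineKer {s : ℤ} {p : Polynomial A} {v : κ → Polynomial A}
    (hp : p ∈ intDegreeLE A (e - s)) (hv : v ∈ lineKer a Ψ s) : p • v ∈ lineKer a Ψ e := by
  refine ⟨mem_linePiece.2 fun i => ?_, ?_⟩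
  · simpa using mul_mem_intDegreeLE hp (mem_linePiece.1 hv.1 i)
  · change Ψ.mulVec (p • v) = 0
    rw [Matrix.mulVec_smul, (mem_lineKer.1 hv).2, smul_zero]

lemma X_smul_mem_lineKer {v : κ → Polynomial A} :
    (Polynomial.X : Polynomial A) • v ∈ lineKer a Ψ (e + 1) ↔ v ∈ lineKer a Ψ e := by
  rw [mem_lineKer, mem_lineKer, X_smul_mem_linePiece, Matrix.mulVec_smul]
  refine and_congr_right fun _ => ⟨fun h => funext fun j => ?_, fun h => by rw [h, smul_zero]⟩
  simpa using congrFun h j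

/-- Exactness of `⊕ O(-a i) → ⊕ O(-b j) → 0` on all sufficiently high graded pieces over the line,
i.e. the cokernel has finite length. -/
def LineFiniteColength (a : κ → ℤ) (b : ι → ℤ) (Ψ : Matrix ι κ (Polynomial A)) : Prop :=
  ∀ᶠ d in atTop, linePiece A b d ≤ (linePiece A a d).map (Ψ.mulVecLin.restrictScalars A)

end Line

section LineField

open Filter Module

variable {K : Type*} [Field K] {ι κ : Type*} {a : κ → ℤ} {b : ι → ℤ} {e : ℤ}

instance finiteDimensional_linePiece [Finite κ] : FiniteDimensional K (linePiece K a e) :=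
  (linePieceEquiv K a e).symm.finiteDimensional

lemma finrank_map_add_finrank_inf_ker {V W : Type*} [AddCommGroup V] [Module K V]
    [AddCommGroup W] [Module K W] (P : Submodule K V) [FiniteDimensional K P] (f : V →ₗ[K] W) :
    finrank K (P.map f) + finrank K (P ⊓ LinearMap.ker f : Submodule K V) = finrank K P := by
  rw [← (f.domRestrict P).finrank_range_add_finrank_ker, LinearMap.range_domRestrict,
    ← Submodule.finrank_map_subtype_eq P (LinearMap.ker (f.domRestrict P)),
    LinearMap.ker_domRestrict, Submodule.map_comap_subtype]

lemma linearIndependent_pair_of_mul_ne_mul {A : Type*} [CommRing A] [IsDomain A] {u v : κ → A}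
    {i j : κ} (h : u i * v j ≠ u j * v i) : LinearIndependent A ![u, v] := by
  refine LinearIndependent.pair_iff.2 fun s t hst => ?_
  have hi : s * u i + t * v i = 0 := congrFun hst i
  have hj : s * u j + t * v j = 0 := congrFun hst j
  have hs : s * (u i * v j - u j * v i) = 0 := by linear_combination v j * hi - v i * hj
  have ht : t * (u i * v j - u j * v i) = 0 := by linear_combination u i * hj - u j * hi
  exact ⟨(mul_eq_zero.1 hs).resolve_right (sub_ne_zero.2 h),
    (mul_eq_zero.1 ht).resolve_right (sub_ne_zero.2 h)⟩

/-- Multiplication by the coordinate of the line. -/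
def mulX (K κ : Type*) [Field K] : (κ → Polynomial K) →ₗ[K] (κ → Polynomial K) :=
  (LinearMap.lsmul (Polynomial K) (κ → Polynomial K) Polynomial.X).restrictScalars K

lemma mulX_injective : Function.Injective (mulX K κ) :=
  smul_right_injective _ (Polynomial.X_ne_zero (R := K))

lemma antitone_of_convex_of_eventually_zero {g : ℤ → ℤ}
    (hconv : ∀ e, 2 * g (e + 1) ≤ g (e + 2) + g e) (hzero : ∀ᶠ e in atTop, g e = 0) :
    Antitone g := by
  have hmono : Monotone fun e => g (e + 1) - g e := monotone_int_of_le_succ fun e => by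
    have := hconv e
    rw [add_assoc, one_add_one_eq_two]
    linarith
  refine antitone_int_of_succ_le fun e => ?_
  obtain ⟨s, hs, hs1, hes⟩ := (hzero.and ((tendsto_atTop_add_const_right _ 1 tendsto_id).eventually
    hzero |>.and (eventually_ge_atTop e))).exists
  have := hmono hes
  simp only [id_eq] at hs1 this
  rw [hs, hs1] at this
  linarith

variable [Fintype κ] {Ψ : Matrix ι κ (Polynomial K)}

instance finiteDimensional_lineKer : FiniteDimensional K (lineKer a Ψ e) :=
  Submodule.finiteDimensional_of_le (inf_le_left : lineKer a Ψ e ≤ linePiece K a e)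

lemma finrank_linePiece : finrank K (linePiece K a e) = ∑ i, (e - a i + 1).toNat := by
  rw [(linePieceEquiv K a e).finrank_eq, finrank_fintype_fun_eq_card, Fintype.card_sigma]
  simp only [Fintype.card_fin]

lemma eventually_finrank_linePiece (a : κ → ℤ) :
    ∀ᶠ e in atTop, (finrank K (linePiece K a e) : ℤ) = Fintype.card κ * (e + 1) - ∑ i, a i := by
  filter_upwards [eventually_all.2 fun i => eventually_ge_atTop (a i)] with e he
  rw [finrank_linePiece, Nat.cast_sum]
  calc ∑ i, ((e - a i + 1).toNat : ℤ) = ∑ i, (e + 1 - a i) :=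
        Finset.sum_congr rfl fun i _ => by have := he i; omega
    _ = Fintype.card κ * (e + 1) - ∑ i, a i := by simp [Finset.sum_sub_distrib]

lemma eventually_finrank_lineKer [Fintype ι] (hΨ : HasLineDegree a b Ψ)
    (hfc : LineFiniteColength a b Ψ) :
    ∀ᶠ e in atTop, (finrank K (lineKer a Ψ e) : ℤ) =
      (Fintype.card κ - Fintype.card ι) * (e + 1) - (∑ i, a i - ∑ j, b j) := by
  filter_upwards [hfc, eventually_finrank_linePiece (K := K) a,
    eventually_finrank_linePiece (K := K) b] with e hsurj ha hb
  have hmap : (linePiece K a e).map (Ψ.mulVecLin.restrictScalars K) = linePiece K b e :=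
    le_antisymm (Submodule.map_le_iff_le_comap.2 fun _ hv => mulVec_mem_linePiece hΨ hv) hsurj
  have hsplit := finrank_map_add_finrank_inf_ker (linePiece K a e) (Ψ.mulVecLin.restrictScalars K)
  rw [hmap, ← lineKer] at hsplit
  zify at hsplit
  linear_combination ha - hb + hsplit

/-- If `u` and `v` were independent, they would span a subsheaf `O(-p) ⊕ O(-q)` of the rank two
kernel, and the degree of the latter is only `-(Σ a - Σ b)`. -/
lemma mul_eq_mul_of_mem_lineKer [Fintype ι] (hcard : Fintype.card κ = Fintype.card ι + 2)
    (hΨ : HasLineDegree a b Ψ) (hfc : LineFiniteColength a b Ψ) {p q : ℤ}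
    {u v : κ → Polynomial K} (hu : u ∈ lineKer a Ψ p) (hv : v ∈ lineKer a Ψ q)
    (hpq : p + q < ∑ i, a i - ∑ j, b j) (i j : κ) : u i * v j = u j * v i := by
  by_contra hne
  have hinj : Function.Injective (Fintype.linearCombination (Polynomial K) ![u, v]) := by
    rw [← linearIndependent_iff_injective_fintypeLinearCombination]
    exact linearIndependent_pair_of_mul_ne_mul hne
  let T := (Fintype.linearCombination (Polynomial K) ![u, v]).restrictScalars K
  have hT : LinearMap.ker T = ⊥ := LinearMap.ker_eq_bot.2 hinj
  have hle (e : ℤ) : (linePiece K ![p, q] e).map T ≤ lineKer a Ψ e := by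
    rintro _ ⟨f, hf, rfl⟩
    have hTf : T f = f 0 • u + f 1 • v := by
      simp [T, Fintype.linearCombination_apply]
    exact hTf ▸ add_mem (smul_mem_lineKer (mem_linePiece.1 hf 0) hu)
      (smul_mem_lineKer (mem_linePiece.1 hf 1) hv)
  clear_value T
  obtain ⟨e, hker, hpiece⟩ := ((eventually_finrank_lineKer hΨ hfc).and
    (eventually_finrank_linePiece (K := K) ![p, q])).exists
  have hrank := finrank_map_add_finrank_inf_ker (linePiece K ![p, q] e) T
  rw [hT, inf_bot_eq, finrank_bot, add_zero] at hrank
  have hmono := Submodule.finrank_mono (hle e)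
  rw [hrank] at hmono
  zify at hmono
  rw [hker, hpiece, hcard] at hmono
  simp only [Fintype.card_fin, Fin.sum_univ_two, Matrix.cons_val_zero, Matrix.cons_val_one] at hmono
  push_cast at hmono
  linarith

lemma sup_map_mulX_le (e : ℤ) :
    lineKer a Ψ e ⊔ (lineKer a Ψ e).map (mulX K κ) ≤ lineKer a Ψ (e + 1) :=
  sup_le (lineKer_mono (by lia))
    (Submodule.map_le_iff_le_comap.2 fun _ hv => X_smul_mem_lineKer.2 hv)

lemma inf_map_mulX (e : ℤ) :
    lineKer a Ψ (e + 1) ⊓ (lineKer a Ψ (e + 1)).map (mulX K κ) =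
      (lineKer a Ψ e).map (mulX K κ) := by
  refine le_antisymm ?_ ?_
  · rintro _ ⟨hXv, v, -, rfl⟩
    exact ⟨v, X_smul_mem_lineKer.1 hXv, rfl⟩
  · exact le_inf (Submodule.map_le_iff_le_comap.2 fun _ hv => X_smul_mem_lineKer.2 hv)
      (Submodule.map_mono (lineKer_mono (by lia)))

lemma finrank_map_mulX (e : ℤ) :
    finrank K ((lineKer a Ψ e).map (mulX K κ)) = finrank K (lineKer a Ψ e) :=
  (Submodule.equivMapOfInjective _ mulX_injective _).finrank_eq.symm

lemma finrank_sup_map_mulX (e : ℤ) :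
    finrank K (lineKer a Ψ (e + 1) ⊔ (lineKer a Ψ (e + 1)).map (mulX K κ) :
      Submodule K (κ → Polynomial K)) + finrank K (lineKer a Ψ e) =
      2 * finrank K (lineKer a Ψ (e + 1)) := by
  have h := Submodule.finrank_sup_add_finrank_inf_eq (lineKer a Ψ (e + 1))
    ((lineKer a Ψ (e + 1)).map (mulX K κ))
  rw [inf_map_mulX, finrank_map_mulX, finrank_map_mulX] at h
  rw [h, two_mul]

/-- Since `lineKer a Ψ e + X • lineKer a Ψ e ⊆ lineKer a Ψ (e + 1)`, the Hilbert function is convex,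
and so is its difference `g` from the expected one. As `g` vanishes in high degrees, it is antitone,
and it vanishes in degree `m - 1`. -/
lemma finrank_lineKer [Fintype ι] (hΨ : HasLineDegree a b Ψ) (hfc : LineFiniteColength a b Ψ)
    {m : ℤ} (hm : ∑ i, a i - ∑ j, b j = (Fintype.card κ - Fintype.card ι) * m)
    (h0 : lineKer a Ψ (m - 1) = ⊥) (he : m - 1 ≤ e) :
    (finrank K (lineKer a Ψ e) : ℤ) = (Fintype.card κ - Fintype.card ι) * (e + 1 - m) := by
  let g (e : ℤ) : ℤ :=
    finrank K (lineKer a Ψ e) - (Fintype.card κ - Fintype.card ι) * (e + 1 - m)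
  have hzero : ∀ᶠ e in atTop, g e = 0 := by
    filter_upwards [eventually_finrank_lineKer hΨ hfc] with e he
    simp only [g, he, hm]
    ring
  have hanti : Antitone g := by
    refine antitone_of_convex_of_eventually_zero (fun e => ?_) hzero
    have hsup := finrank_sup_map_mulX (a := a) (Ψ := Ψ) e
    have hle := Submodule.finrank_mono (sup_map_mulX_le (a := a) (Ψ := Ψ) (e + 1))
    rw [add_assoc, one_add_one_eq_two] at hle
    simp only [g]
    linarith
  obtain ⟨s, hs, hes⟩ := (hzero.and (eventually_ge_atTop e)).exists
  have hm1 : g (m - 1) = 0 := by simp [g, h0]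
  have := hanti he
  have := hanti hes
  exact sub_eq_zero.1 (show g e = 0 by lia)

lemma sup_map_mulX_eq [Fintype ι] (hΨ : HasLineDegree a b Ψ) (hfc : LineFiniteColength a b Ψ)
    {m : ℤ} (hm : ∑ i, a i - ∑ j, b j = (Fintype.card κ - Fintype.card ι) * m)
    (h0 : lineKer a Ψ (m - 1) = ⊥) (he : m ≤ e) :
    lineKer a Ψ e ⊔ (lineKer a Ψ e).map (mulX K κ) = lineKer a Ψ (e + 1) := by
  refine Submodule.eq_of_le_of_finrank_eq (sup_map_mulX_le e) ?_
  have hrank {s : ℤ} (hs : m - 1 ≤ s) := finrank_lineKer hΨ hfc hm h0 hs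
  have hsup := finrank_sup_map_mulX (a := a) (Ψ := Ψ) (e - 1)
  rw [sub_add_cancel] at hsup
  have h1 := hrank (s := e - 1) (by lia)
  have h2 := hrank (s := e) (by lia)
  have h3 := hrank (s := e + 1) (by lia)
  zify at hsup ⊢
  linarith

/-- If `g = Ψ u` and `X g = Ψ v` one degree higher, then the kernel element `X u - v` is `k' + X k`
with `k` and `k'` in the kernel one degree lower, so `u - k` is a preimage of `g` of the right
degree. -/
lemma linePiece_le_map_of_succ {d : ℤ}
    (hgen : lineKer a Ψ (d + 1) ⊔ (lineKer a Ψ (d + 1)).map (mulX K κ) = lineKer a Ψ (d + 1 + 1))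
    (hsurj : linePiece K b (d + 1) ≤
      (linePiece K a (d + 1)).map (Ψ.mulVecLin.restrictScalars K)) :
    linePiece K b d ≤ (linePiece K a d).map (Ψ.mulVecLin.restrictScalars K) := by
  intro g hg
  obtain ⟨u, hu, hug : Ψ.mulVec u = g⟩ := hsurj (linePiece_mono (by lia) hg)
  obtain ⟨v, hv, hvg : Ψ.mulVec v = Polynomial.X • g⟩ := hsurj (X_smul_mem_linePiece.2 hg)
  have hker : (Polynomial.X : Polynomial K) • u - v ∈ lineKer a Ψ (d + 1 + 1) := by
    refine mem_lineKer.2 ⟨sub_mem (X_smul_mem_linePiece.2 hu) (linePiece_mono (by lia) hv), ?_⟩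
    rw [Matrix.mulVec_sub, Matrix.mulVec_smul, hug, hvg, sub_self]
  rw [← hgen] at hker
  obtain ⟨k', hk', _, ⟨k, hk, rfl⟩, hsum⟩ := Submodule.mem_sup.1 hker
  refine ⟨u - k, X_smul_mem_linePiece.1 ?_, ?_⟩
  · have : (Polynomial.X : Polynomial K) • (u - k) = v + k' := by
      rw [smul_sub, sub_eq_iff_eq_add, add_assoc, ← sub_eq_iff_eq_add']
      exact hsum.symm
    exact this ▸ add_mem hv hk'.1
  · change Ψ.mulVec (u - k) = g
    rw [Matrix.mulVec_sub, hug, (mem_lineKer.1 hk).2, sub_zero]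

theorem linePiece_le_map [Fintype ι] (hΨ : HasLineDegree a b Ψ) (hfc : LineFiniteColength a b Ψ)
    {m : ℤ} (hm : ∑ i, a i - ∑ j, b j = (Fintype.card κ - Fintype.card ι) * m)
    (h0 : lineKer a Ψ (m - 1) = ⊥) {d : ℤ} (hd : m - 1 ≤ d) :
    linePiece K b d ≤ (linePiece K a d).map (Ψ.mulVecLin.restrictScalars K) := by
  obtain ⟨D, hD, hdD⟩ := (hfc.and (eventually_ge_atTop d)).exists
  induction d, hdD using Int.leInductionDown with
  | base => exact hD
  | pred d _ ih =>
    rw [← sub_add_cancel d 1] at ih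
    exact linePiece_le_map_of_succ (sup_map_mulX_eq hΨ hfc hm h0 (by lia)) (ih (by lia))

end LineField
section Homogeneous

variable {σ R B K : Type*}

lemma aeval_smul_of_isHomogeneous [CommSemiring R] [CommSemiring B] [Algebra R B]
    {p : MvPolynomial σ R} {k : ℕ} (hp : p.IsHomogeneous k) (r : B) (v : σ → B) :
    aeval (r • v) p = r ^ k * aeval v p := by
  simp only [aeval_def, eval₂_eq, Finset.mul_sum]
  refine Finset.sum_congr rfl fun s hs => ?_
  simp only [Pi.smul_apply, smul_eq_mul, mul_pow, Finset.prod_mul_distrib,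
    Finset.prod_pow_eq_pow_sum]
  rw [hp.degree_eq_sum_deg_support hs]
  ring

variable [Field K] {p : MvPolynomial (Fin 3) K} {e : ℤ}

lemma homog_iff_degree : homog p e ↔ ∀ s, coeff s p ≠ 0 → (s.degree : ℤ) = e := by
  refine forall_congr' fun s => imp_congr_right fun _ => ?_
  rw [Finsupp.weight_apply, Finsupp.sum, Finsupp.degree_apply]
  simp

lemma homog_natCast {k : ℕ} : homog p k ↔ p.IsHomogeneous k := by
  rw [homog_iff_degree]
  refine forall_congr' fun s => imp_congr_right fun _ => ?_
  rw [Nat.cast_inj, Finsupp.degree_eq_weight_one, Pi.one_def]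

lemma eq_zero_or_isHomogeneous (hp : homog p e) :
    p = 0 ∨ ∃ k : ℕ, (k : ℤ) = e ∧ p.IsHomogeneous k := by
  refine or_iff_not_imp_left.2 fun h0 => ?_
  obtain ⟨s, hs⟩ := ne_zero_iff.1 h0
  obtain rfl := homog_iff_degree.1 hp s hs
  exact ⟨s.degree, rfl, homog_natCast.1 hp⟩

end Homogeneous

section LineRestriction

variable {K A B : Type*} [Field K] [CommRing A] [Algebra K A] [CommRing B] [Algebra K B]
  {p : MvPolynomial (Fin 3) K} {e : ℤ}

/-- The point with homogeneous coordinates `(x, y)` on the line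
`c 0 * X + c 1 * Y + c 2 * Z = 0`. -/
def linePoint (c : Fin 3 → A) (x y : A) : Fin 3 → A :=
  ![c 2 * x, c 2 * y, -(c 0 * x + c 1 * y)]

/-- Restriction of polynomials to the line `c 0 * X + c 1 * Y + c 2 * Z = 0`, written in the affine
coordinate `Y / X` of the line. -/
def restrictLine (K : Type*) [Field K] {A : Type*} [CommRing A] [Algebra K A] (c : Fin 3 → A) :
    MvPolynomial (Fin 3) K →ₐ[K] Polynomial A :=
  aeval (linePoint (Polynomial.C ∘ c) 1 Polynomial.X)

lemma map_aeval_linePoint (f : A →ₐ[K] B) (c : Fin 3 → A) (x y : A)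
    (p : MvPolynomial (Fin 3) K) :
    f (aeval (linePoint c x y) p) = aeval (linePoint (f ∘ c) (f x) (f y)) p := by
  rw [comp_aeval_apply]
  congr 2
  funext i
  fin_cases i <;> simp [linePoint]

lemma map_restrictLine (f : A →ₐ[K] B) (c : Fin 3 → A) (p : MvPolynomial (Fin 3) K) :
    (restrictLine K c p).map (f : A →+* B) = restrictLine K (f ∘ c) p := by
  refine (map_aeval_linePoint (Polynomial.mapAlgHom f) _ _ _ p).trans ?_
  simp [restrictLine, Function.comp_def]

lemma eval_restrictLine (c : Fin 3 → A) (t : A) (p : MvPolynomial (Fin 3) K) :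
    (restrictLine K c p).eval t = aeval (linePoint c 1 t) p := by
  refine (map_aeval_linePoint ((Polynomial.aeval (R := A) t).restrictScalars K) _ _ _ p).trans ?_
  simp [Function.comp_def]

lemma restrictLine_mem_intDegreeLE (c : Fin 3 → A) (hp : homog p e) :
    restrictLine K c p ∈ intDegreeLE A e := by
  obtain rfl | ⟨k, rfl, hk⟩ := eq_zero_or_isHomogeneous hp
  · rw [map_zero]
    exact zero_mem _
  have hdeg : (restrictLine K c p).natDegree ≤ k * 1 := by
    rw [restrictLine, ← aeval_map_algebraMap A]
    refine aeval_natDegree_le _ (hk.map _).totalDegree_le _ fun i => ?_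
    fin_cases i
    · simp [linePoint]
    · simpa [linePoint] using Polynomial.natDegree_linear_le (a := c 2) (b := 0)
    · simpa [linePoint, add_comm] using
        Polynomial.natDegree_linear_le (a := -c 1) (b := -c 0)
  exact mem_intDegreeLE.2 fun l hl =>
    Polynomial.coeff_eq_zero_of_natDegree_lt (by omega)

lemma restrictLine_linform (c : Fin 3 → K) : restrictLine K c (linform c) = 0 := by
  simp only [restrictLine, linform, linePoint, Fin.sum_univ_three, Function.comp_apply, map_add,
    map_mul, algHom_C, Polynomial.algebraMap_eq, aeval_X, Matrix.cons_val_zero, Matrix.cons_val_one,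
    Matrix.cons_val]
  ring

lemma aeval_linePoint_eq_zero {F : Type*} [Field F] [Algebra K F] {c : Fin 3 → F} {k : ℕ}
    (hp : p.IsHomogeneous k) (h0 : restrictLine K c p = 0) {x : F} (hx : x ≠ 0) (y : F) :
    aeval (linePoint c x y) p = 0 := by
  have h : linePoint c x y = x • linePoint c 1 (y / x) := by
    funext i
    fin_cases i <;> simp [linePoint] <;> field_simp
  rw [h, aeval_smul_of_isHomogeneous hp, ← eval_restrictLine, h0, Polynomial.eval_zero, mul_zero]

lemma linform_dvd {c : Fin 3 → K} (hc : c 2 ≠ 0) (hp : homog p e)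
    (h0 : restrictLine K c p = 0) : linform c ∣ p := by
  obtain rfl | ⟨k, -, hk⟩ := eq_zero_or_isHomogeneous hp
  · exact dvd_zero _
  let R := MvPolynomial (Fin 3) K
  have hpoint : aeval (linePoint (C ∘ c) (X 0) (X 1) : Fin 3 → R) p = 0 := by
    let ι := IsScalarTower.toAlgHom K R (FractionRing R)
    have hι : Function.Injective ι := FaithfulSMul.algebraMap_injective R (FractionRing R)
    refine (map_eq_zero_iff ι hι).1 ?_
    rw [map_aeval_linePoint]
    refine aeval_linePoint_eq_zero hk ?_ ((map_ne_zero_iff ι hι).2 (X_ne_zero 0)) _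
    exact (map_restrictLine (ι.comp (Algebra.ofId K R)) c p).symm.trans
      (by rw [h0, Polynomial.map_zero])
  let π := Ideal.Quotient.mkₐ K (Ideal.span {linform c})
  have hπ : π ∘ linePoint (C ∘ c) (X 0) (X 1) = π ∘ ((C (c 2) : R) • X) := by
    funext i
    refine Ideal.Quotient.eq.2 (Ideal.mem_span_singleton.2 ?_)
    fin_cases i
    · simp [linePoint]
    · simp [linePoint]
    · refine ⟨-1, ?_⟩
      simp only [linePoint, linform, Fin.sum_univ_three, Function.comp_apply, Pi.smul_apply,
        smul_eq_mul, Fin.reduceFinMk, Matrix.cons_val]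
      ring
  have hmem : π (C (c 2) ^ k * p) = 0 := by
    rw [← aeval_X_left_apply p, ← aeval_smul_of_isHomogeneous hk, comp_aeval_apply]
    change aeval (π ∘ _) p = 0
    rw [← hπ]
    exact (comp_aeval_apply _ π p).symm.trans (by rw [hpoint, map_zero])
  have hdvd : linform c ∣ C (c 2) ^ k * p :=
    Ideal.mem_span_singleton.1 (Ideal.Quotient.eq_zero_iff_mem.1 hmem)
  have hunit : IsUnit (C (c 2) ^ k : R) := ((isUnit_iff_ne_zero.2 hc).map C).pow k
  exact (hunit.dvd_mul_left).1 hdvd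

lemma exists_homog_eq_linform_mul {c : Fin 3 → K} (hc : c 2 ≠ 0) (hp : homog p e)
    (h0 : restrictLine K c p = 0) : ∃ q, homog q (e - 1) ∧ p = linform c * q := by
  obtain ⟨q, rfl⟩ := linform_dvd hc hp h0
  let 𝒜 := weightedHomogeneousSubmodule K fun _ : Fin 3 => (1 : ℤ)
  let _ : GradedAlgebra 𝒜 := weightedGradedAlgebra K fun _ : Fin 3 => (1 : ℤ)
  have hcomponent := DirectSum.coe_decompose_mul_add_of_left_mem 𝒜 (j := e - 1) (b := q)
    (homog_linform c)
  rw [add_sub_cancel, DirectSum.decompose_of_mem_same 𝒜 hp] at hcomponent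
  exact ⟨_, (DirectSum.decompose 𝒜 q (e - 1)).2, hcomponent⟩

lemma exists_homog_restrictLine_eq {c : Fin 3 → K} (hc : c 2 ≠ 0) {q : Polynomial K}
    (hq : q ∈ intDegreeLE K e) : ∃ p, homog p e ∧ restrictLine K c p = q := by
  classical
  suffices h : intDegreeLE K e ≤ (weightedHomogeneousSubmodule K (fun _ : Fin 3 => (1 : ℤ)) e).map
      (restrictLine K c).toLinearMap from h hq
  rw [intDegreeLE, Polynomial.degreeLT_eq_span_X_pow, Submodule.span_le]
  rintro _ hX
  obtain ⟨l, hl, rfl⟩ := Finset.mem_image.1 hX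
  obtain ⟨k, rfl⟩ : ∃ k : ℕ, e = l + k :=
    ⟨(e - l).toNat, by have := Finset.mem_range.1 hl; omega⟩
  refine ⟨C (c 2 ^ (l + k))⁻¹ * (X 1 ^ l * X 0 ^ k), ?_, ?_⟩
  · rw [SetLike.mem_coe, mem_weightedHomogeneousSubmodule, ← Nat.cast_add]
    exact homog_natCast.2
      (((isHomogeneous_X_pow 1 l).mul (isHomogeneous_X_pow 0 k)).C_mul _)
  · have hcancel : Polynomial.C (c 2 ^ (l + k))⁻¹ * Polynomial.C (c 2) ^ (l + k) = 1 := by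
      rw [← Polynomial.C_pow, ← Polynomial.C_mul, inv_mul_cancel₀ (pow_ne_zero _ hc),
        Polynomial.C_1]
    simp only [restrictLine, linePoint, AlgHom.toLinearMap_apply, map_mul, map_pow, algHom_C,
      Polynomial.algebraMap_eq, aeval_X, Function.comp_apply, Matrix.cons_val_zero,
      Matrix.cons_val_one]
    linear_combination Polynomial.X ^ l * hcancel

variable {N : ℕ} {a : Fin N → ℤ} {v : Fin N → MvPolynomial (Fin 3) K}

lemma restrictLine_comp_mem_linePiece (c : Fin 3 → A) (hv : v ∈ degPiece N a e) :
    restrictLine K c ∘ v ∈ linePiece A a e :=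
  mem_linePiece.2 fun i => restrictLine_mem_intDegreeLE c (mem_degPiece.1 hv i)

lemma exists_restrictLine_comp_eq {c : Fin 3 → K} (hc : c 2 ≠ 0) {w : Fin N → Polynomial K}
    (hw : w ∈ linePiece K a e) : ∃ v ∈ degPiece N a e, restrictLine K c ∘ v = w := by
  choose v hv hvw using fun i => exists_homog_restrictLine_eq hc (mem_linePiece.1 hw i)
  exact ⟨v, mem_degPiece.2 hv, funext hvw⟩

lemma exists_eq_linform_smul {c : Fin 3 → K} (hc : c 2 ≠ 0) (hv : v ∈ degPiece N a e)
    (h0 : restrictLine K c ∘ v = 0) : ∃ w ∈ degPiece N a (e - 1), v = linform c • w := by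
  choose w hw hvw using fun i =>
    exists_homog_eq_linform_mul hc (mem_degPiece.1 hv i) (congrFun h0 i)
  refine ⟨w, mem_degPiece.2 fun i => ?_, funext hvw⟩
  rw [sub_right_comm]
  exact hw i

lemma restrictLine_comp_mulVec {ι κ : Type*} [Fintype κ] (c : Fin 3 → A)
    (Φ : Matrix ι κ (MvPolynomial (Fin 3) K)) (v : κ → MvPolynomial (Fin 3) K) :
    restrictLine K c ∘ Φ.mulVec v = (Φ.map (restrictLine K c)).mulVec (restrictLine K c ∘ v) := by
  funext j
  simp [Matrix.mulVec, dotProduct, map_sum, map_mul]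

lemma hasLineDegree_map_restrictLine {ι κ : Type*} {a : κ → ℤ} {b : ι → ℤ}
    {Φ : Matrix ι κ (MvPolynomial (Fin 3) K)} (hΦ : ∀ j i, homog (Φ j i) (a i - b j))
    (c : Fin 3 → A) : HasLineDegree a b (Φ.map (restrictLine K c)) :=
  fun j i => restrictLine_mem_intDegreeLE c (hΦ j i)

lemma lineFiniteColength_map_restrictLine {n : ℕ} {a : Fin (n + 2) → ℤ} {b : Fin n → ℤ}
    {Φ : Matrix (Fin n) (Fin (n + 2)) (MvPolynomial (Fin 3) K)} (hfin : FiniteColength n a b Φ)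
    {c : Fin 3 → K} (hc : c 2 ≠ 0) : LineFiniteColength a b (Φ.map (restrictLine K c)) := by
  obtain ⟨D, hD⟩ := hfin
  filter_upwards [Filter.eventually_ge_atTop D] with d hd w hw
  obtain ⟨v, hv, rfl⟩ := exists_restrictLine_comp_eq hc hw
  obtain ⟨u, hu, rfl⟩ := hD d hd hv
  exact ⟨_, restrictLine_comp_mem_linePiece c hu, (restrictLine_comp_mulVec c Φ u).symm⟩

end LineRestriction

section GenericLine

variable {K : Type*} [Field K]

/-- The line `s * X + t * Y + Z = 0` with independent coefficients `s = X 0` and `t = X 1`. -/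
def genericLine (K : Type*) [Field K] : Fin 3 → MvPolynomial (Fin 2) K := ![X 0, X 1, 1]

/-- The coordinate ring of the affine part of the incidence variety of lines and points: the
coefficients `X 0`, `X 1` of the generic line, and the coordinate `Polynomial.X` on it. -/
abbrev IncidenceRing (K : Type*) [Field K] := Polynomial (MvPolynomial (Fin 2) K)

/-- The map `duality` on the coefficients of the line. -/
def dualityParam (K : Type*) [Field K] : MvPolynomial (Fin 2) K →ₐ[K] IncidenceRing K :=
  aeval ![-(Polynomial.C (X 0) + Polynomial.C (X 1) * Polynomial.X), Polynomial.X]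

/-- The symmetry of the incidence variety `s + r * t + w = 0` of the lines `(s, r, 1)` and the
points `(1, t, w)` that exchanges `(s, r)` with `(w, t)`. It turns the lines through a fixed point
into the points of a fixed line. -/
def duality (K : Type*) [Field K] : IncidenceRing K →ₐ[K] IncidenceRing K :=
  Polynomial.eval₂AlgHom (dualityParam K) (Polynomial.C (X 1)) fun _ => Commute.all _ _

lemma duality_C (q : MvPolynomial (Fin 2) K) :
    duality K (Polynomial.C q) = dualityParam K q :=
  Polynomial.eval₂_C _ _

lemma duality_X : duality K Polynomial.X = Polynomial.C (X 1) :=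
  Polynomial.eval₂_X _ _

lemma duality_duality (v : IncidenceRing K) : duality K (duality K v) = v := by
  suffices h : (duality K).comp (duality K) = AlgHom.id K (IncidenceRing K) from
    DFunLike.congr_fun h v
  refine Polynomial.algHom_ext' (MvPolynomial.algHom_ext fun i => ?_) ?_
  · fin_cases i <;> simp [duality_C, duality_X, dualityParam]
  · simp [duality_C, duality_X, dualityParam]

lemma duality_restrictLine (p : MvPolynomial (Fin 3) K) :
    duality K (restrictLine K (genericLine K) p) = Polynomial.C (aeval ![1, X 1, X 0] p) := by
  refine (map_aeval_linePoint (A := IncidenceRing K) (B := IncidenceRing K)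
    (duality K) _ _ _ p).trans ?_
  refine .trans ?_ (comp_aeval_apply _ (Polynomial.CAlgHom (R := K)) p).symm
  congr 2
  funext i
  fin_cases i <;>
    simp [linePoint, genericLine, duality_C, duality_X, dualityParam]

/-- Differentiation along the pencil of lines through a fixed point, `∂/∂X₁ - t ∂/∂X₀` in the
coordinates `X 0`, `X 1` of the line and `t` of the point. -/
def pencilDeriv (K : Type*) [Field K] : Derivation K (IncidenceRing K) (IncidenceRing K) :=
  PolynomialModule.equivPolynomialSelf.compDer (pderiv 1).mapCoeffs -
    (Polynomial.X : IncidenceRing K) •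
      PolynomialModule.equivPolynomialSelf.compDer (pderiv 0).mapCoeffs

lemma coeff_pencilDeriv_succ (v : IncidenceRing K) (l : ℕ) :
    (pencilDeriv K v).coeff (l + 1) = pderiv 1 (v.coeff (l + 1)) - pderiv 0 (v.coeff l) := by
  rw [pencilDeriv, Derivation.sub_apply, Derivation.smul_apply, Polynomial.coeff_sub,
    smul_eq_mul, Polynomial.coeff_X_mul]
  rfl

lemma pencilDeriv_mem_linePiece {κ : Type*} {a : κ → ℤ} {e : ℤ} {v : κ → IncidenceRing K}
    (hv : v ∈ linePiece (MvPolynomial (Fin 2) K) a e) :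
    pencilDeriv K ∘ v ∈ linePiece (MvPolynomial (Fin 2) K) a (e + 1) := by
  have hcoeff {i} := mem_intDegreeLE.1 (mem_linePiece.1 hv i)
  refine mem_linePiece.2 fun i => mem_intDegreeLE.2 fun l hl => ?_
  cases l with
  | zero =>
    have hi : v i = 0 := Polynomial.ext fun l => hcoeff l (by omega)
    rw [Function.comp_apply, hi, map_zero, Polynomial.coeff_zero]
  | succ l =>
    rw [Function.comp_apply, coeff_pencilDeriv_succ, hcoeff _ (by omega), hcoeff _ (by omega),
      map_zero, map_zero, sub_zero]

lemma derivative_duality (v : IncidenceRing K) :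
    Polynomial.derivative (duality K v) = duality K (pencilDeriv K v) := by
  let Good (v : IncidenceRing K) : Prop :=
    Polynomial.derivative (duality K v) = duality K (pencilDeriv K v)
  have hadd {v w} (hv : Good v) (hw : Good w) : Good (v + w) := by
    simp only [Good, map_add] at *
    rw [hv, hw]
  have hmul {v w} (hv : Good v) (hw : Good w) : Good (v * w) := by
    simp only [Good, map_mul, Polynomial.derivative_mul, Derivation.leibniz, map_add,
      smul_eq_mul] at *
    rw [hv, hw]
    ring
  have hscalar (r : K) : Good (algebraMap K _ r) := by
    simp only [Good, AlgHom.commutes, Derivation.map_algebraMap, map_zero]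
    exact Polynomial.derivative_C
  have hX : Good Polynomial.X := by
    simp [Good, duality_X, pencilDeriv]
  have hparam (i : Fin 2) : Good (Polynomial.C (X i)) := by
    fin_cases i <;> simp [Good, duality_C, duality_X, dualityParam, pencilDeriv]
  have hconst (q : MvPolynomial (Fin 2) K) : Good (Polynomial.C q) := by
    induction q using MvPolynomial.induction_on with
    | C r => exact hscalar r
    | add p q hp hq => exact Polynomial.C_add (R := MvPolynomial (Fin 2) K) ▸ hadd hp hq
    | mul_X p i hp => exact Polynomial.C_mul (R := MvPolynomial (Fin 2) K) ▸ hmul hp (hparam i)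
  induction v using Polynomial.induction_on with
  | C q => exact hconst q
  | add v w hv hw => exact hadd hv hw
  | monomial l q hv =>
    rw [pow_succ, ← mul_assoc]
    exact hmul hv hX

lemma pencilDeriv_restrictLine (p : MvPolynomial (Fin 3) K) :
    pencilDeriv K (restrictLine K (genericLine K) p) = 0 := by
  rw [← duality_duality (pencilDeriv K _), ← derivative_duality, duality_restrictLine,
    Polynomial.derivative_C, map_zero]

lemma exists_duality_eq_C_of_dvd_pencilDeriv [CharZero K] {v : IncidenceRing K}
    (h : v ∣ pencilDeriv K v) : ∃ q, duality K v = Polynomial.C q := by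
  have hdvd : duality K v ∣ Polynomial.derivative (duality K v) :=
    derivative_duality v ▸ map_dvd (duality K) h
  refine ⟨_, Polynomial.eq_C_of_derivative_eq_zero ?_⟩
  by_cases h0 : duality K v = 0
  · rw [h0, Polynomial.derivative_zero]
  · exact Polynomial.eq_zero_of_dvd_of_degree_lt hdvd (Polynomial.degree_derivative_lt h0)

lemma coeff_coeff_aeval_monomial_map (q : MvPolynomial (Fin 2) K) (s : Fin 2 →₀ ℕ) :
    ((aeval ![Polynomial.C Polynomial.X * Polynomial.X, Polynomial.X] q :
      Polynomial (Polynomial K)).coeff s.degree).coeff (s 0) = coeff s q := by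
  classical
  have hs : s.degree = s 0 + s 1 := by rw [Finsupp.degree_eq_sum, Fin.sum_univ_two]
  induction q using MvPolynomial.induction_on' with
  | add p q hp hq => rw [map_add, Polynomial.coeff_add, Polynomial.coeff_add, hp, hq, coeff_add]
  | monomial u r =>
    have hmonomial : (aeval ![Polynomial.C Polynomial.X * Polynomial.X, Polynomial.X]
        (monomial u r) : Polynomial (Polynomial K)) =
        Polynomial.monomial (u 0 + u 1) (Polynomial.monomial (u 0) r) := by
      rw [aeval_monomial, Finsupp.prod_fintype _ _ fun _ => pow_zero _, Fin.prod_univ_two,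
        ← Polynomial.C_mul_X_pow_eq_monomial, ← Polynomial.C_mul_X_pow_eq_monomial]
      simp only [Matrix.cons_val_zero, Matrix.cons_val_one, Polynomial.C_mul, Polynomial.C_pow,
        Polynomial.algebraMap_apply, Algebra.algebraMap_self_apply]
      ring
    have hu : u = s ↔ u 0 = s 0 ∧ u 1 = s 1 := by
      rw [Finsupp.ext_iff, Fin.forall_fin_two]
    rw [hmonomial, coeff_monomial, Polynomial.coeff_monomial, hs]
    by_cases h : u = s
    · subst h
      rw [if_pos rfl, if_pos rfl, Polynomial.coeff_monomial_same]
    · rw [if_neg h]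
      split_ifs with hdeg
      · exact Polynomial.coeff_monomial_of_ne r fun h0 => h (hu.2 (by omega))
      · exact Polynomial.coeff_zero _

lemma degree_le_of_dualityParam_mem_intDegreeLE {q : MvPolynomial (Fin 2) K} {e : ℤ}
    (hq : dualityParam K q ∈ intDegreeLE (MvPolynomial (Fin 2) K) e) {s : Fin 2 →₀ ℕ}
    (hs : coeff s q ≠ 0) : (s.degree : ℤ) ≤ e := by
  let π : MvPolynomial (Fin 2) K →ₐ[K] Polynomial K := aeval ![0, -Polynomial.X]
  have hπ : (dualityParam K q).map (π : MvPolynomial (Fin 2) K →+* Polynomial K) =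
      aeval ![Polynomial.C Polynomial.X * Polynomial.X, Polynomial.X] q := by
    refine (comp_aeval_apply _ (Polynomial.mapAlgHom π) q).trans ?_
    congr 2
    funext i
    fin_cases i <;> simp [π]
  by_contra! h
  refine hs ?_
  rw [← coeff_coeff_aeval_monomial_map, ← hπ, Polynomial.coeff_map, mem_intDegreeLE.1 hq _ h,
    map_zero, Polynomial.coeff_zero]

lemma exists_homog_restrictLine_genericLine_eq {v : IncidenceRing K} {e : ℤ}
    (hv : v ∈ intDegreeLE (MvPolynomial (Fin 2) K) e) {q : MvPolynomial (Fin 2) K}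
    (hq : duality K v = Polynomial.C q) :
    ∃ p, homog p e ∧ restrictLine K (genericLine K) p = v := by
  have hvq : dualityParam K q = v := by rw [← duality_C, ← hq, duality_duality]
  have hterm (s : Fin 2 →₀ ℕ) : ∃ p, homog p e ∧
      restrictLine K (genericLine K) p = dualityParam K (monomial s (coeff s q)) := by
    by_cases hs : coeff s q = 0
    · exact ⟨0, isWeightedHomogeneous_zero _ _ _, by rw [hs, monomial_zero, map_zero, map_zero]⟩
    obtain ⟨k, rfl⟩ : ∃ k : ℕ, e = (s 0 + s 1 + k : ℕ) := by
      have h := degree_le_of_dualityParam_mem_intDegreeLE (hvq ▸ hv) hs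
      rw [Finsupp.degree_eq_sum, Fin.sum_univ_two] at h
      exact ⟨(e - (s 0 + s 1 : ℕ)).toNat, by omega⟩
    refine ⟨C (coeff s q) * (X 2 ^ s 0 * X 1 ^ s 1 * X 0 ^ k), homog_natCast.2
      ((((isHomogeneous_X_pow _ _).mul (isHomogeneous_X_pow _ _)).mul
        (isHomogeneous_X_pow _ _)).C_mul _), ?_⟩
    rw [dualityParam, aeval_monomial, Finsupp.prod_fintype _ _ fun _ => pow_zero _,
      Fin.prod_univ_two]
    simp [restrictLine, linePoint, genericLine]
  choose p hp hpq using hterm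
  refine ⟨∑ s ∈ q.support, p s, ?_, ?_⟩
  · exact sum_mem (S := weightedHomogeneousSubmodule K (fun _ : Fin 3 => (1 : ℤ)) e)
      fun s _ => hp s
  · rw [map_sum, Finset.sum_congr rfl fun s _ => hpq s, ← map_sum, ← as_sum, hvq]

lemma eq_zero_of_restrictLine_genericLine_eq_zero {p : MvPolynomial (Fin 3) K} {e : ℤ}
    (hp : homog p e) (h0 : restrictLine K (genericLine K) p = 0) : p = 0 := by
  obtain rfl | ⟨k, -, hk⟩ := eq_zero_or_isHomogeneous hp
  · rfl
  let R := MvPolynomial (Fin 3) K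
  let ι := IsScalarTower.toAlgHom K R (FractionRing R)
  have hι : Function.Injective ι := FaithfulSMul.algebraMap_injective R (FractionRing R)
  have hx : ι (X 0) ≠ 0 := (map_ne_zero_iff ι hι).2 (X_ne_zero 0)
  let f : MvPolynomial (Fin 2) K →ₐ[K] FractionRing R := aeval ![-(ι (X 2) / ι (X 0)), 0]
  have hf : restrictLine K (f ∘ genericLine K) p = 0 := by
    rw [← map_restrictLine, h0, Polynomial.map_zero]
  have hpoint : linePoint (f ∘ genericLine K) (ι (X 0)) (ι (X 1)) = ι ∘ X := by
    funext i
    fin_cases i <;> simp [linePoint, genericLine, f, div_mul_cancel₀ _ hx]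
  refine (map_eq_zero_iff ι hι).1 ?_
  rw [← aeval_linePoint_eq_zero hk hf hx (ι (X 1)), hpoint]
  conv_lhs => rw [← aeval_X_left_apply p, comp_aeval_apply]
  rfl

end GenericLine

section GenericSplitting

lemma exists_eq_mul_forall_dvd {A κ : Type*} [CommRing A]
    [UniqueFactorizationMonoid A] [Finite κ] {u : κ → A} (hu : u ≠ 0) :
    ∃ r : A, ∃ v : κ → A, r ≠ 0 ∧ u = r • v ∧ ∀ x y, (∀ i, x ∣ y * v i) → x ∣ y := by
  classical
  cases nonempty_fintype κ
  let _ : StrongNormalizationMonoid A := UniqueFactorizationMonoid.strongNormalizationMonoid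
  let _ : NormalizedGCDMonoid A := UniqueFactorizationMonoid.toNormalizedGCDMonoid A
  obtain ⟨i, hi⟩ := Function.ne_iff.1 hu
  obtain ⟨v, hv, hgcd⟩ := Finset.extract_gcd u (s := Finset.univ) ⟨i, Finset.mem_univ _⟩
  refine ⟨Finset.univ.gcd u, v, fun h => hi (Finset.gcd_eq_zero_iff.1 h i (Finset.mem_univ _)),
    funext fun j => hv j (Finset.mem_univ _), fun x y h => ?_⟩
  have hdvd := (Finset.gcd_mul_left' Finset.univ v y).dvd
  rw [hgcd, mul_one] at hdvd
  exact (Finset.dvd_gcd fun j _ => h j).trans hdvd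

lemma mem_linePiece_of_smul {A κ : Type*} [CommRing A] [IsDomain A] {a : κ → ℤ} {e : ℤ}
    {r : Polynomial A} (hr : r ≠ 0) {v : κ → Polynomial A} (hv : r • v ∈ linePiece A a e) :
    v ∈ linePiece A a e := by
  refine mem_linePiece.2 fun i => mem_intDegreeLE.2 fun l hl => ?_
  by_contra hcoeff
  have hvi : v i ≠ 0 := fun h => hcoeff (by rw [h, Polynomial.coeff_zero])
  have hdeg : l ≤ (r * v i).natDegree := by
    rw [Polynomial.natDegree_mul hr hvi]
    exact (Polynomial.le_natDegree_of_ne_zero hcoeff).trans (Nat.le_add_left _ _)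
  exact Polynomial.leadingCoeff_ne_zero.2 (mul_ne_zero hr hvi)
    (mem_intDegreeLE.1 (mem_linePiece.1 hv i) _ (by omega))

lemma map_mem_lineKer {A B ι κ : Type*} [CommRing A] [CommRing B] [Fintype κ] {a : κ → ℤ} {e : ℤ}
    (f : A →+* B) {Ψ : Matrix ι κ (Polynomial A)} {v : κ → Polynomial A} (hv : v ∈ lineKer a Ψ e) :
    Polynomial.map f ∘ v ∈ lineKer a (Ψ.map (Polynomial.map f)) e := by
  obtain ⟨hvmem, hv0⟩ := mem_lineKer.1 hv
  refine mem_lineKer.2 ⟨mem_linePiece.2 fun i => mem_intDegreeLE.2 fun l hl => ?_, ?_⟩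
  · rw [Function.comp_apply, Polynomial.coeff_map, mem_intDegreeLE.1 (mem_linePiece.1 hvmem i) l hl,
      map_zero]
  · funext j
    refine (RingHom.map_mulVec (Polynomial.mapRingHom f) Ψ v j).symm.trans ?_
    rw [hv0, Pi.zero_apply, map_zero, Pi.zero_apply]

variable {K : Type*} [Field K]

lemma map_restrictLine_matrix {A B ι κ : Type*} [CommRing A] [Algebra K A] [CommRing B]
    [Algebra K B] (f : A →ₐ[K] B) (c : Fin 3 → A) (Φ : Matrix ι κ (MvPolynomial (Fin 3) K)) :
    (Φ.map (restrictLine K c)).map (Polynomial.map (f : A →+* B)) =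
      Φ.map (restrictLine K (f ∘ c)) := by
  ext1 j i
  exact map_restrictLine f c (Φ j i)

lemma pencilDeriv_mem_lineKer {ι κ : Type*} [Fintype κ] {a : κ → ℤ} {e : ℤ}
    {Φ : Matrix ι κ (MvPolynomial (Fin 3) K)} {v : κ → IncidenceRing K}
    (hv : v ∈ lineKer a (Φ.map (restrictLine K (genericLine K))) e) :
    pencilDeriv K ∘ v ∈ lineKer a (Φ.map (restrictLine K (genericLine K))) (e + 1) := by
  obtain ⟨hvmem, hv0⟩ := mem_lineKer.1 hv
  refine mem_lineKer.2 ⟨pencilDeriv_mem_linePiece hvmem, funext fun j => ?_⟩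
  have h := congrArg (pencilDeriv K) (congrFun hv0 j)
  simpa only [Matrix.mulVec, dotProduct, map_sum, Derivation.leibniz, Matrix.map_apply,
    Function.comp_apply, pencilDeriv_restrictLine, smul_eq_mul, mul_zero, add_zero, Pi.zero_apply,
    map_zero] using h

variable {n : ℕ} {a : Fin (n + 2) → ℤ} {b : Fin n → ℤ}
  {Φ : Matrix (Fin n) (Fin (n + 2)) (MvPolynomial (Fin 3) K)} {e : ℤ}

lemma mulVec_mem_degPiece (hΦ : ∀ j i, homog (Φ j i) (a i - b j))
    {v : Fin (n + 2) → MvPolynomial (Fin 3) K} (hv : v ∈ degPiece (n + 2) a e) :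
    Φ.mulVec v ∈ degPiece n b e := by
  refine mem_degPiece.2 fun j => sum_mem
    (S := weightedHomogeneousSubmodule K (fun _ : Fin 3 => (1 : ℤ)) (e - b j)) fun i _ => ?_
  have h := (hΦ j i).mul (mem_degPiece.1 hv i)
  rwa [show a i - b j + (e - a i) = e - b j by ring] at h

lemma mul_eq_mul_of_mem_lineKer_genericLine [Infinite K]
    (hΦ : ∀ j i, homog (Φ j i) (a i - b j)) (hfin : FiniteColength n a b Φ) {p q : ℤ}
    {u v : Fin (n + 2) → IncidenceRing K}
    (hu : u ∈ lineKer a (Φ.map (restrictLine K (genericLine K))) p)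
    (hv : v ∈ lineKer a (Φ.map (restrictLine K (genericLine K))) q)
    (hpq : p + q < ∑ i, a i - ∑ j, b j) (i j : Fin (n + 2)) : u i * v j = u j * v i := by
  refine Polynomial.ext fun l => MvPolynomial.funext fun γ => ?_
  let f : MvPolynomial (Fin 2) K →ₐ[K] K := aeval γ
  have hspec {r : ℤ} {w : Fin (n + 2) → IncidenceRing K}
      (hw : w ∈ lineKer a (Φ.map (restrictLine K (genericLine K))) r) :
      Polynomial.map f ∘ w ∈ lineKer a (Φ.map (restrictLine K (f ∘ genericLine K))) r :=
    map_restrictLine_matrix f _ Φ ▸ map_mem_lineKer (f : MvPolynomial (Fin 2) K →+* K) hw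
  have hc : (f ∘ genericLine K) 2 ≠ 0 := by simp [genericLine]
  have h := mul_eq_mul_of_mem_lineKer (by simp) (hasLineDegree_map_restrictLine hΦ _)
    (lineFiniteColength_map_restrictLine hfin hc) (hspec hu) (hspec hv) hpq i j
  simp only [Function.comp_apply, ← Polynomial.map_mul] at h
  exact (Polynomial.coeff_map _ _).symm.trans
    ((congrArg (Polynomial.coeff · l) h).trans (Polynomial.coeff_map _ _))

/-- A kernel vector of minimal degree on the generic line is proportional to its derivative along
the pencil of lines through a point, so it depends on the point only and extends to the plane. -/
theorem lineKer_genericLine_eq_bot [CharZero K] (hΦ : ∀ j i, homog (Φ j i) (a i - b j))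
    (hfin : FiniteColength n a b Φ) (he : 2 * e + 1 < ∑ i, a i - ∑ j, b j)
    (h0 : Nd n a Φ e = ⊥) : lineKer a (Φ.map (restrictLine K (genericLine K))) e = ⊥ := by
  refine (Submodule.eq_bot_iff _).2 fun u hu => ?_
  by_contra hne
  obtain ⟨r, v, hr, rfl, hprim⟩ := exists_eq_mul_forall_dvd hne
  obtain ⟨humem, hu0⟩ := mem_lineKer.1 hu
  have hv : v ∈ lineKer a (Φ.map (restrictLine K (genericLine K))) e := by
    rw [Matrix.mulVec_smul] at hu0
    exact mem_lineKer.2 ⟨mem_linePiece_of_smul hr humem, (smul_eq_zero.1 hu0).resolve_left hr⟩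
  have hdvd (i) : v i ∣ pencilDeriv K (v i) := by
    refine hprim _ _ fun j => ⟨pencilDeriv K (v j), ?_⟩
    rw [mul_comm]
    exact mul_eq_mul_of_mem_lineKer_genericLine hΦ hfin hv (pencilDeriv_mem_lineKer hv)
      (by omega) j i
  choose p hp hpv using fun i => (exists_duality_eq_C_of_dvd_pencilDeriv (hdvd i)).elim fun _ =>
    exists_homog_restrictLine_genericLine_eq (mem_linePiece.1 (mem_lineKer.1 hv).1 i)
  obtain rfl : restrictLine K (genericLine K) ∘ p = v := funext hpv
  have hpmem : p ∈ degPiece (n + 2) a e := mem_degPiece.2 hp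
  have hp0 : Φ.mulVec p = 0 := funext fun j => by
    refine eq_zero_of_restrictLine_genericLine_eq_zero
      (mem_degPiece.1 (mulVec_mem_degPiece hΦ hpmem) j) ?_
    exact congrFun ((restrictLine_comp_mulVec _ Φ p).trans (mem_lineKer.1 hv).2) j
  obtain rfl : p = 0 := (Submodule.eq_bot_iff _).1 h0 p ⟨hpmem, hp0⟩
  exact hne (funext fun _ => by simp)

end GenericSplitting

section Openness

lemma exists_submatrix_det_ne_zero {F ι κ : Type*} [Field F] [Finite ι] [Fintype κ]
    [DecidableEq κ] {T : Matrix ι κ F} (hT : LinearIndependent F T.col) :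
    ∃ f : κ → ι, (T.submatrix f id).det ≠ 0 := by
  cases nonempty_fintype ι
  have hrank : Module.finrank F (Submodule.span F (Set.range T.row)) = Fintype.card κ := by
    rw [← T.rank_eq_finrank_span_row, ← T.rank_transpose]
    exact hT.rank_matrix
  obtain ⟨g, hg, -, hindep⟩ := Submodule.exists_fun_fin_finrank_span_eq F (Set.range T.row)
  choose f hf using hg
  let σ : κ ≃ Fin (Module.finrank F (Submodule.span F (Set.range T.row))) :=
    Fintype.equivOfCardEq (by rw [hrank, Fintype.card_fin])
  refine ⟨f ∘ σ, IsUnit.ne_zero <| (Matrix.isUnit_iff_isUnit_det _).1 <|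
    Matrix.linearIndependent_rows_iff_isUnit.1 ?_⟩
  rw [← funext hf] at hindep
  exact hindep.comp σ σ.injective

lemma det_submatrix_map {A B ι κ : Type*} [CommRing A] [CommRing B] [Fintype κ] [DecidableEq κ]
    (f : A →+* B) (T : Matrix ι κ A) (r : κ → ι) :
    ((T.map f).submatrix r id).det = f (T.submatrix r id).det := by
  rw [RingHom.map_det]
  rfl

lemma mulVec_injective_iff_exists_det_ne_zero {A ι κ : Type*} [CommRing A] [IsDomain A]
    [Finite ι] [Fintype κ] [DecidableEq κ] {T : Matrix ι κ A} :
    Function.Injective T.mulVec ↔ ∃ f : κ → ι, (T.submatrix f id).det ≠ 0 := by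
  refine ⟨fun h => ?_, fun ⟨f, hf⟩ u v huv => ?_⟩
  · have hcol := (linearIndependent_algebraMap_comp_iff (S := FractionRing A)).2
      (Matrix.mulVec_injective_iff.1 h)
    change LinearIndependent _ (T.map (algebraMap A (FractionRing A))).col at hcol
    obtain ⟨f, hf⟩ := exists_submatrix_det_ne_zero hcol
    exact ⟨f, fun h0 => hf (by rw [det_submatrix_map, h0, map_zero])⟩
  · exact Matrix.mulVec_injective_of_det_ne_zero hf (funext fun k => congrFun huv (f k))

variable {A B ι κ : Type*} [CommRing A] [CommRing B] {a : κ → ℤ} {b : ι → ℤ} {e : ℤ}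

/-- The matrix of the degree-`e` piece of the map `Ψ` over the line, in the monomial bases. -/
def coeffMatrix (a : κ → ℤ) (b : ι → ℤ) (e : ℤ) (Ψ : Matrix ι κ (Polynomial A)) :
    Matrix (Σ j, Fin (e - b j + 1).toNat) (Σ i, Fin (e - a i + 1).toNat) A :=
  Matrix.of fun q p => (Ψ q.1 p.1 * Polynomial.monomial p.2 1).coeff q.2

lemma coeffMatrix_map (f : A →+* B) (Ψ : Matrix ι κ (Polynomial A)) :
    coeffMatrix a b e (Ψ.map (Polynomial.map f)) = (coeffMatrix a b e Ψ).map f := by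
  ext q p
  rw [Matrix.map_apply, coeffMatrix, coeffMatrix, Matrix.of_apply, Matrix.of_apply,
    Matrix.map_apply, ← Polynomial.coeff_map, Polynomial.map_mul,
    Polynomial.map_monomial, f.map_one]

lemma HasLineDegree.map {Ψ : Matrix ι κ (Polynomial A)} (hΨ : HasLineDegree a b Ψ) (f : A →+* B) :
    HasLineDegree a b (Ψ.map (Polynomial.map f)) := fun j i => mem_intDegreeLE.2 fun l hl => by
  rw [Matrix.map_apply, Polynomial.coeff_map, mem_intDegreeLE.1 (hΨ j i) l hl, map_zero]

variable [Fintype κ] {Ψ : Matrix ι κ (Polynomial A)}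

lemma coeffMatrix_mulVec_linePieceEquiv (v : linePiece A a e) (q : Σ j, Fin (e - b j + 1).toNat) :
    (coeffMatrix a b e Ψ).mulVec (linePieceEquiv A a e v) q = (Ψ.mulVec v.1 q.1).coeff q.2 := by
  have hv (i) : v.1 i = ∑ l : Fin (e - a i + 1).toNat,
      Polynomial.monomial (l : ℕ) ((v.1 i).coeff l) :=
    (congrArg Subtype.val
      ((Polynomial.degreeLTEquiv A _).symm_apply_apply ⟨v.1 i, mem_linePiece.1 v.2 i⟩)).symm
  have hentry (i) : (Ψ q.1 i * v.1 i).coeff q.2 = ∑ l : Fin (e - a i + 1).toNat,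
      (Ψ q.1 i * Polynomial.monomial l 1).coeff q.2 * (v.1 i).coeff l := by
    conv_lhs => rw [hv i, Finset.mul_sum, Polynomial.finsetSum_coeff]
    refine Finset.sum_congr rfl fun l _ => ?_
    rw [← mul_one ((v.1 i).coeff l), ← Polynomial.C_mul_monomial, mul_left_comm,
      Polynomial.coeff_C_mul, mul_comm, mul_one]
  simp only [Matrix.mulVec, dotProduct, Polynomial.finsetSum_coeff, hentry]
  exact Fintype.sum_sigma _

lemma lineKer_eq_bot_iff (hΨ : HasLineDegree a b Ψ) :
    lineKer a Ψ e = ⊥ ↔ Function.Injective (coeffMatrix a b e Ψ).mulVec := by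
  have hker (v : linePiece A a e) :
      (coeffMatrix a b e Ψ).mulVec (linePieceEquiv A a e v) = 0 ↔ Ψ.mulVec v.1 = 0 := by
    let w : linePiece A b e := ⟨Ψ.mulVec v.1, mulVec_mem_linePiece hΨ v.2⟩
    have hw : (coeffMatrix a b e Ψ).mulVec (linePieceEquiv A a e v) = linePieceEquiv A b e w :=
      funext fun q => coeffMatrix_mulVec_linePieceEquiv v q
    rw [hw, LinearEquiv.map_eq_zero_iff, ← Submodule.coe_eq_zero]
  change _ ↔ Function.Injective (coeffMatrix a b e Ψ).mulVecLin
  rw [← LinearMap.ker_eq_bot, LinearMap.ker_eq_bot', (linePieceEquiv A a e).surjective.forall,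
    Submodule.eq_bot_iff]
  simp only [Matrix.mulVecLin_apply, hker, LinearEquiv.map_eq_zero_iff, mem_lineKer, and_imp,
    Subtype.forall, Submodule.mk_eq_zero]

theorem exists_forall_lineKer_map_eq_bot [IsDomain B] [Finite ι] (hΨ : HasLineDegree a b Ψ)
    (f : A →+* B) (hf : lineKer a (Ψ.map (Polynomial.map f)) e = ⊥) :
    ∃ P : A, f P ≠ 0 ∧ ∀ {C : Type*} [CommRing C] [IsDomain C] (g : A →+* C), g P ≠ 0 →
      lineKer a (Ψ.map (Polynomial.map g)) e = ⊥ := by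
  classical
  obtain ⟨r, hr⟩ := mulVec_injective_iff_exists_det_ne_zero.1
    ((lineKer_eq_bot_iff (hΨ.map f)).1 hf)
  rw [coeffMatrix_map, det_submatrix_map] at hr
  refine ⟨_, hr, fun g hg => (lineKer_eq_bot_iff (hΨ.map g)).2
    (mulVec_injective_iff_exists_det_ne_zero.2 ⟨r, ?_⟩)⟩
  rwa [coeffMatrix_map, det_submatrix_map]

end Openness

section GeneralLine

variable {K : Type*} [Field K] {n : ℕ} {a : Fin (n + 2) → ℤ} {b : Fin n → ℤ}
  {Φ : Matrix (Fin n) (Fin (n + 2)) (MvPolynomial (Fin 3) K)} {d : ℤ} {c : Fin 3 → K}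

lemma map_restrictLine_X {A : Type*} [CommRing A] [Algebra K A] (c : Fin 3 → A) :
    (Φ.map (restrictLine K X)).map (Polynomial.map (aeval c : _ →ₐ[K] A).toRingHom) =
      Φ.map (restrictLine K c) := by
  have hX : (aeval c : _ →ₐ[K] A) ∘ X = c := funext (aeval_X c)
  exact (map_restrictLine_matrix _ X Φ).trans (by rw [hX])

theorem exists_forall_lineKer_restrictLine_eq_bot [CharZero K]
    (hΦ : ∀ j i, homog (Φ j i) (a i - b j)) (hfin : FiniteColength n a b Φ) {e : ℤ}
    (he : 2 * e + 1 < ∑ i, a i - ∑ j, b j) (h0 : Nd n a Φ e = ⊥) :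
    ∃ P : MvPolynomial (Fin 3) K, P ≠ 0 ∧ ∀ c : Fin 3 → K, eval c P ≠ 0 →
      c 2 ≠ 0 ∧ lineKer a (Φ.map (restrictLine K c)) e = ⊥ := by
  obtain ⟨P, hP, hopen⟩ := exists_forall_lineKer_map_eq_bot (hasLineDegree_map_restrictLine hΦ X)
    (aeval (genericLine K) : _ →ₐ[K] MvPolynomial (Fin 2) K).toRingHom
    (by rw [map_restrictLine_X]; exact lineKer_genericLine_eq_bot hΦ hfin he h0)
  refine ⟨P * X 2, mul_ne_zero (fun h => hP (by rw [h, map_zero])) (X_ne_zero 2), fun c hc => ?_⟩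
  rw [map_mul, eval_X] at hc
  refine ⟨right_ne_zero_of_mul hc, ?_⟩
  rw [← map_restrictLine_X]
  refine hopen _ ?_
  simpa [aeval_eq_eval] using left_ne_zero_of_mul hc

lemma linform_ne_zero (hc : c ≠ 0) : linform c ≠ 0 := fun h => hc <| funext fun i => by
  simpa [linform, Pi.single_apply] using congrArg (eval (Pi.single i 1)) h

theorem mulLmap_injective (hc : c 2 ≠ 0)
    (h0 : lineKer a (Φ.map (restrictLine K c)) d = ⊥) :
    Function.Injective (mulLmap n a b Φ (linform c) (homog_linform c) d) := by
  refine (injective_iff_map_eq_zero _).2 fun x hx => ?_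
  obtain ⟨⟨w, hw⟩, rfl⟩ := Submodule.Quotient.mk_surjective _ x
  rw [mulLmap, Submodule.mapQ_apply, Submodule.Quotient.mk_eq_zero] at hx
  obtain ⟨v, hv, hvw : Φ.mulVec v = linform c • w⟩ := hx
  have hker : restrictLine K c ∘ v ∈ lineKer a (Φ.map (restrictLine K c)) d := by
    refine mem_lineKer.2 ⟨restrictLine_comp_mem_linePiece c hv, ?_⟩
    rw [← restrictLine_comp_mulVec, hvw]
    funext j
    simp [restrictLine_linform]
  rw [h0, Submodule.mem_bot] at hker
  obtain ⟨u, hu, rfl⟩ := exists_eq_linform_smul hc hv hker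
  rw [Matrix.mulVec_smul] at hvw
  exact (Submodule.Quotient.mk_eq_zero _).2 ⟨u, hu,
    smul_right_injective _ (linform_ne_zero fun h => hc (congrFun h 2)) hvw⟩

theorem mulLmap_surjective (hΦ : ∀ j i, homog (Φ j i) (a i - b j)) (hc : c 2 ≠ 0)
    (hle : linePiece K b d ≤ (linePiece K a d).map
      ((Φ.map (restrictLine K c)).mulVecLin.restrictScalars K)) :
    Function.Surjective (mulLmap n a b Φ (linform c) (homog_linform c) d) := by
  intro x
  obtain ⟨⟨w, hw⟩, rfl⟩ := Submodule.Quotient.mk_surjective _ x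
  obtain ⟨g, hg, hgw⟩ := hle (restrictLine_comp_mem_linePiece c hw)
  obtain ⟨v, hv, rfl⟩ := exists_restrictLine_comp_eq hc hg
  have hzero : restrictLine K c ∘ (w - Φ.mulVec v) = 0 := by
    have h : restrictLine K c ∘ Φ.mulVec v = restrictLine K c ∘ w :=
      (restrictLine_comp_mulVec c Φ v).trans hgw
    funext j
    simpa [sub_eq_zero] using (congrFun h j).symm
  obtain ⟨u, hu, huw⟩ := exists_eq_linform_smul hc (sub_mem hw (mulVec_mem_degPiece hΦ hv)) hzero
  refine ⟨Submodule.Quotient.mk ⟨u, hu⟩, ?_⟩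
  rw [mulLmap, Submodule.mapQ_apply, Submodule.Quotient.eq]
  refine ⟨-v, neg_mem hv, ?_⟩
  change Φ.mulVec (-v) = linform c • u - w
  rw [← huw, Matrix.mulVec_neg]
  abel

lemma Nd_sub_one_eq_bot (h0 : Nd n a Φ d = ⊥) : Nd n a Φ (d - 1) = ⊥ := by
  refine (Submodule.eq_bot_iff _).2 fun v ⟨hv, (hΦv : Φ.mulVec v = 0)⟩ => ?_
  have hmem : linform (Pi.single 0 (1 : K)) • v ∈ Nd n a Φ d := by
    refine ⟨mulL_mem (homog_linform _) hv, ?_⟩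
    change Φ.mulVec _ = 0
    rw [Matrix.mulVec_smul, hΦv, smul_zero]
  rw [h0, Submodule.mem_bot] at hmem
  exact (smul_eq_zero.1 hmem).resolve_left (linform_ne_zero (by simp))

end GeneralLine

end GrauertMulich

end

theorem statement1_general {K : Type*} [Field K] [CharZero K]
    (n : ℕ) (a : Fin (n + 2) → ℤ) (b : Fin n → ℤ)
    (Φ : Matrix (Fin n) (Fin (n + 2)) (MvPolynomial (Fin 3) K))
    (hΦ : ∀ j i, homog (Φ j i) (a i - b j))
    (hfin : FiniteColength n a b Φ)
    (m : ℤ) (hm : (∑ i, a i) - (∑ j, b j) = 2 * m)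
    (hsemistable : Nd n a Φ (m - 1) = ⊥) :
    ∃ P : MvPolynomial (Fin 3) K, P ≠ 0 ∧ ∀ c : Fin 3 → K, eval c P ≠ 0 →
      (∀ d : ℤ, d ≤ m - 1 →
        Function.Injective (mulLmap n a b Φ (linform c) (homog_linform c) d)) ∧
      (∀ d : ℤ, m - 1 ≤ d →
        Function.Surjective (mulLmap n a b Φ (linform c) (homog_linform c) d)) := by
  obtain ⟨P, hP, hopen⟩ := GrauertMulich.exists_forall_lineKer_restrictLine_eq_bot hΦ hfin
    (by omega) hsemistable
  refine ⟨P, hP, fun c hPc => ?_⟩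
  obtain ⟨hc, h0⟩ := hopen c hPc
  refine ⟨fun d hd => GrauertMulich.mulLmap_injective hc ?_, fun d hd =>
    GrauertMulich.mulLmap_surjective hΦ hc ?_⟩
  · exact eq_bot_iff.2 (h0 ▸ GrauertMulich.lineKer_mono hd)
  · exact GrauertMulich.linePiece_le_map (GrauertMulich.hasLineDegree_map_restrictLine hΦ c)
      (GrauertMulich.lineFiniteColength_map_restrictLine hfin hc) (by simpa using hm) h0 hd

/-- If `a - b` is even (`a - b = 2m`) and `N_m = 0` (the associated normalized
rank-2 bundle is stable with `c₁ = 0`), then for a general linear form `L` the multiplication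
map `×L : M_{d-1} → M_d` is injective for all `d ≤ m - 1` and surjective for all `d ≥ m - 1`. -/
theorem statement1 {K : Type*} [Field K] [IsAlgClosed K] [CharZero K]
    (n : ℕ) (a : Fin (n + 2) → ℤ) (b : Fin n → ℤ)
    (Φ : Matrix (Fin n) (Fin (n + 2)) (MvPolynomial (Fin 3) K))
    (hΦ : ∀ j i, homog (Φ j i) (a i - b j))
    (hfin : FiniteColength n a b Φ)
    (m : ℤ) (hm : (∑ i, a i) - (∑ j, b j) = 2 * m)
    (hstable : Nd n a Φ m = ⊥) :
    ∃ P : MvPolynomial (Fin 3) K, P ≠ 0 ∧ ∀ c : Fin 3 → K, eval c P ≠ 0 →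
      (∀ d : ℤ, d ≤ m - 1 →
        Function.Injective (mulLmap n a b Φ (linform c) (homog_linform c) d)) ∧
      (∀ d : ℤ, m - 1 ≤ d →
        Function.Surjective (mulLmap n a b Φ (linform c) (homog_linform c) d)) := by
  exact statement1_general n a b Φ hΦ hfin m hm (GrauertMulich.Nd_sub_one_eq_bot hstable)
end
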